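/- arXiv:1201.6401 — 2 statements merged into one kernel-verified Lean document; each statement's English description precedes it below -/
import Mathlib

section
/- The closure (in ℝ^m) of the image F(U) equals the union, over all admissible tuples I, of the images φ_I(ℝ^{m−1}), where φ_I : ℝ^{m−1} → ℝ^m is the tropicalization of F ∘ T_I defined by φ_I(r)_ℓ = Σ_i β_{i,ℓ} · min({ν(c_{i,t}) + r_t : 1 ≤ t ≤ m−1, c_{i,t} ≠ 0} ∪ {ν(c_{i,m}) : c_{i,m} ≠ 0}). -/
/-- The additive valuation associated to the norm of a nonarchimedean normed field:
`ν x = -log ‖x‖`. -/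
noncomputable def nuVal (K : Type*) [NormedField K] (x : K) : ℝ := -Real.log ‖x‖

/-- The affine form `f_i(x) = β_{i,1} x_1 + ⋯ + β_{i,m-1} x_{m-1} + β_{i,m}`
(here with `m - 1` replaced by `m`, i.e. coefficients indexed by `Fin (m+1)`). -/
noncomputable def affForm (K : Type*) [NormedField K] {N m : ℕ}
    (B : Matrix (Fin N) (Fin (m + 1)) ℤ) (i : Fin N) (x : Fin m → K) : K :=
  (∑ t : Fin m, (B i t.castSucc : K) * x t) + (B i (Fin.last m) : K)

/-- `F(λ)_ℓ = Σ_i β_{i,ℓ} ν(f_i(λ))`. -/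
noncomputable def Fmap (K : Type*) [NormedField K] {N m : ℕ}
    (B : Matrix (Fin N) (Fin (m + 1)) ℤ) (lam : Fin m → K) (ℓ : Fin (m + 1)) : ℝ :=
  ∑ i, (B i ℓ : ℝ) * nuVal K (affForm K B i lam)

/-- `I = (i_1 < ⋯ < i_{m-1})` is admissible if the corresponding minor of `B`
is invertible over `ℚ`. -/
def Admissible {N m : ℕ} (B : Matrix (Fin N) (Fin (m + 1)) ℤ) (I : Fin m → Fin N) : Prop :=
  StrictMono I ∧ (Matrix.of fun j t : Fin m => (B (I j) t.castSucc : ℚ)).det ≠ 0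


/-- The tropicalization `φ_I(r)_ℓ = Σ_i β_{i,ℓ} · min({ν(c_{i,t}) + r_t : c_{i,t} ≠ 0} ∪
{ν(c_{i,m}) : c_{i,m} ≠ 0})`. -/
noncomputable def tropPhi (K : Type*) [NormedField K] {N m : ℕ}
    (B : Matrix (Fin N) (Fin (m + 1)) ℤ) (c : Fin N → Fin (m + 1) → ℚ)
    (r : Fin m → ℝ) (ℓ : Fin (m + 1)) : ℝ :=
  ∑ i, (B i ℓ : ℝ) *
    sInf ({x : ℝ | ∃ t : Fin m, c i t.castSucc ≠ 0 ∧ x = nuVal K ((c i t.castSucc : ℚ) : K) + r t}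
      ∪ {x : ℝ | c i (Fin.last m) ≠ 0 ∧ x = nuVal K ((c i (Fin.last m) : ℚ) : K)})


lemma one_var_elim {ι : Type} [Finite ι] (a b : ι → ℝ) :
    (∃ s : ℝ, ∀ j, a j * s ≤ b j) ↔ (∀ j, a j = 0 → 0 ≤ b j) ∧
      ∀ p n, 0 < a p → a n < 0 → 0 ≤ -a n * b p + a p * b n := by
  classical
  have := Fintype.ofFinite ι
  constructor
  · rintro ⟨s, hs⟩
    refine ⟨fun j hj => by simpa [hj] using hs j, fun p n hp hn => ?_⟩
    have h1 := hs p
    have h2 := hs n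
    nlinarith
  · rintro ⟨h0, h1⟩
    have key : ∃ s : ℝ, (∀ p, 0 < a p → s ≤ b p / a p) ∧ (∀ n, a n < 0 → b n / a n ≤ s) := by
      have hpn : ∀ p n, 0 < a p → a n < 0 → b n / a n ≤ b p / a p := by
        intro p n hp hn
        rw [div_le_iff_of_neg hn, div_mul_eq_mul_div, div_le_iff₀ hp]
        have := h1 p n hp hn
        nlinarith
      by_cases hN : (Finset.univ.filter (fun n => a n < 0)).Nonempty
      · obtain ⟨n0, hn0, hmax⟩ := Finset.exists_max_image _ (fun n => b n / a n) hN
        simp only [Finset.mem_filter, Finset.mem_univ, true_and] at hn0 hmax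
        exact ⟨b n0 / a n0, fun p hp => hpn p n0 hp hn0, hmax⟩
      · have hN' : ∀ n, ¬ a n < 0 := by
          intro n hn
          exact hN ⟨n, by simp [hn]⟩
        by_cases hP : (Finset.univ.filter (fun n => 0 < a n)).Nonempty
        · obtain ⟨n0, hn0, hmax⟩ := Finset.exists_min_image _ (fun n => b n / a n) hP
          simp only [Finset.mem_filter, Finset.mem_univ, true_and] at hn0 hmax
          exact ⟨b n0 / a n0, hmax, fun n hn => absurd hn (hN' n)⟩
        · have hP' : ∀ n, ¬ 0 < a n := by
            intro n hn
            exact hP ⟨n, by simp [hn]⟩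
          exact ⟨0, fun n hn => absurd hn (hP' n), fun n hn => absurd hn (hN' n)⟩
    obtain ⟨s, hsp, hsn⟩ := key
    refine ⟨s, fun j => ?_⟩
    rcases lt_trichotomy (a j) 0 with h | h | h
    · have := hsn j h
      rw [div_le_iff_of_neg h] at this
      linarith
    · rw [h, zero_mul]; exact h0 j h
    · have := hsp j h
      rw [le_div_iff₀ h] at this
      linarith

/-- Fourier-Motzkin elimination, in the form of a closedness statement. -/
lemma fourier_motzkin_closed {E : Type*} [TopologicalSpace E] (m : ℕ) :
    ∀ (ι : Type) [Finite ι] (g : ι → E → ℝ) (_ : ∀ j, Continuous (g j)) (a : ι → Fin m → ℝ),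
      IsClosed {y | ∃ r : Fin m → ℝ, ∀ j, ∑ t, a j t * r t ≤ g j y} := by
  induction m with
  | zero =>
    intro ι _ g hg a
    have : {y | ∃ r : Fin 0 → ℝ, ∀ j, ∑ t, a j t * r t ≤ g j y} = ⋂ j, {y | 0 ≤ g j y} := by
      ext y
      simp
    rw [this]
    exact isClosed_iInter fun j => isClosed_le continuous_const (hg j)
  | succ m ih =>
    intro ι _ g hg a
    let κ : Type := {j : ι // a j 0 = 0} ⊕ ({p : ι // 0 < a p 0} × {n : ι // a n 0 < 0})
    let g' : κ → E → ℝ := fun k y => Sum.elim (fun j => g j.1 y)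
      (fun q => -a q.2.1 0 * g q.1.1 y + a q.1.1 0 * g q.2.1 y) k
    let a' : κ → Fin m → ℝ := fun k t => Sum.elim (fun j => a j.1 t.succ)
      (fun q => -a q.2.1 0 * a q.1.1 t.succ + a q.1.1 0 * a q.2.1 t.succ) k
    have hg' : ∀ k, Continuous (g' k) := by
      rintro (j | q)
      · exact hg j.1
      · exact ((hg q.1.1).const_mul _).add ((hg q.2.1).const_mul _)
    convert ih κ g' hg' a' using 1
    ext y
    simp only [Set.mem_ofPred_eq]
    have h1 : (∃ r : Fin (m + 1) → ℝ, ∀ j, ∑ t, a j t * r t ≤ g j y) ↔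
        ∃ r : Fin m → ℝ, ∃ s : ℝ, ∀ j, a j 0 * s ≤ g j y - ∑ t, a j t.succ * r t := by
      constructor
      · rintro ⟨r, hr⟩
        refine ⟨fun t => r t.succ, r 0, fun j => ?_⟩
        have := hr j
        rw [Fin.sum_univ_succ] at this
        linarith
      · rintro ⟨r, s, hr⟩
        refine ⟨Fin.cons s r, fun j => ?_⟩
        rw [Fin.sum_univ_succ]
        have := hr j
        simp only [Fin.cons_zero, Fin.cons_succ]
        linarith
    rw [h1]
    refine exists_congr fun r => ?_
    rw [one_var_elim]
    have h2 : ∀ p n : ι, ∑ t : Fin m, (-a n 0 * a p t.succ + a p 0 * a n t.succ) * r t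
        = -a n 0 * ∑ t : Fin m, a p t.succ * r t + a p 0 * ∑ t : Fin m, a n t.succ * r t := by
      intro p n
      rw [Finset.mul_sum, Finset.mul_sum, ← Finset.sum_add_distrib]
      exact Finset.sum_congr rfl fun t _ => by ring
    constructor
    · rintro ⟨h0, hpn⟩ (j | q)
      · have := h0 j.1 j.2
        simp only [g', a', Sum.elim_inl]
        linarith
      · have := hpn q.1.1 q.2.1 q.1.2 q.2.2
        simp only [g', a', Sum.elim_inr]
        rw [h2]
        linarith
    · intro h
      refine ⟨fun j hj => ?_, fun p n hp hn => ?_⟩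
      · have := h (Sum.inl ⟨j, hj⟩)
        simp only [g', a', Sum.elim_inl] at this
        linarith
      · have := h (Sum.inr ⟨⟨p, hp⟩, ⟨n, hn⟩⟩)
        simp only [g', a', Sum.elim_inr] at this
        rw [h2] at this
        linarith

/-- The terms in the tropical minimum. -/
noncomputable def tterm (K : Type*) [NormedField K] {m : ℕ} (d : Fin (m + 1) → ℚ)
    (r : Fin m → ℝ) (s : Fin (m + 1)) : ℝ :=
  nuVal K ((d s : ℚ) : K) + (Fin.snoc r 0 : Fin (m + 1) → ℝ) s

lemma tset_eq (K : Type*) [NormedField K] {m : ℕ} (d : Fin (m + 1) → ℚ) (r : Fin m → ℝ) :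
    ({x : ℝ | ∃ t : Fin m, d t.castSucc ≠ 0 ∧ x = nuVal K ((d t.castSucc : ℚ) : K) + r t}
      ∪ {x : ℝ | d (Fin.last m) ≠ 0 ∧ x = nuVal K ((d (Fin.last m) : ℚ) : K)})
    = {x : ℝ | ∃ s, d s ≠ 0 ∧ x = tterm K d r s} := by
  ext x
  simp only [Set.mem_union, Set.mem_ofPred_eq, tterm]
  rw [Fin.exists_fin_succ']
  simp

lemma tropPhi_eq_of_isLeast (K : Type*) [NormedField K] {N m : ℕ}
    (B : Matrix (Fin N) (Fin (m + 1)) ℤ) (c : Fin N → Fin (m + 1) → ℚ) (r : Fin m → ℝ)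
    (w : Fin N → ℝ) (h : ∀ i, IsLeast {x : ℝ | ∃ s, c i s ≠ 0 ∧ x = tterm K (c i) r s} (w i)) :
    tropPhi K B c r = fun ℓ => ∑ i, (B i ℓ : ℝ) * w i := by
  funext ℓ
  unfold tropPhi
  refine Finset.sum_congr rfl fun i _ => ?_
  rw [tset_eq, (h i).csInf_eq]

lemma exists_least (K : Type*) [NormedField K] {m : ℕ} (d : Fin (m + 1) → ℚ) (hd : ∃ s, d s ≠ 0)
    (r : Fin m → ℝ) : ∃ s, d s ≠ 0 ∧ ∀ s', d s' ≠ 0 → tterm K d r s ≤ tterm K d r s' := by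
  obtain ⟨s0, hs0⟩ := hd
  obtain ⟨s, hs, h⟩ := Finset.exists_min_image (Finset.univ.filter (fun s => d s ≠ 0))
    (tterm K d r) ⟨s0, by simp [hs0]⟩
  simp only [Finset.mem_filter, Finset.mem_univ, true_and] at hs h
  exact ⟨s, hs, h⟩

lemma continuous_tterm (K : Type*) [NormedField K] {m : ℕ} (d : Fin (m + 1) → ℚ)
    (s : Fin (m + 1)) : Continuous (fun r : Fin m → ℝ => tterm K d r s) := by
  unfold tterm
  refine continuous_const.add ?_
  induction s using Fin.lastCases with
  | last => simpa using continuous_const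
  | cast t => simpa using continuous_apply t

lemma continuous_tropPhi (K : Type*) [NormedField K] {N m : ℕ}
    (B : Matrix (Fin N) (Fin (m + 1)) ℤ) (c : Fin N → Fin (m + 1) → ℚ)
    (hc : ∀ i, ∃ s, c i s ≠ 0) : Continuous (tropPhi K B c) := by
  have hne : ∀ i, (Finset.univ.filter (fun s => c i s ≠ 0)).Nonempty := by
    intro i
    obtain ⟨s, hs⟩ := hc i
    exact ⟨s, by simp [hs]⟩
  have h : tropPhi K B c = fun r ℓ => ∑ i, (B i ℓ : ℝ) *
      (Finset.univ.filter (fun s => c i s ≠ 0)).inf' (hne i) (fun s => tterm K (c i) r s) := by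
    funext r
    refine tropPhi_eq_of_isLeast K B c r _ fun i => ⟨?_, ?_⟩
    · obtain ⟨s, hs, h⟩ := Finset.exists_mem_eq_inf' (hne i) (fun s => tterm K (c i) r s)
      simp only [Finset.mem_filter, Finset.mem_univ, true_and] at hs
      exact ⟨s, hs, h⟩
    · rintro x ⟨s, hs, rfl⟩
      exact Finset.inf'_le _ (by simp [hs])
  rw [h]
  refine continuous_pi fun ℓ => continuous_finsetSum _ fun i _ => continuous_const.mul ?_
  exact Continuous.finset_inf'_apply (hne i) fun s _ => continuous_tterm K (c i) s

lemma tterm_lin (K : Type*) [NormedField K] {m : ℕ} (d : Fin (m + 1) → ℚ)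
    (s : Fin (m + 1)) (r : Fin m → ℝ) :
    tterm K d r s = nuVal K ((d s : ℚ) : K) + ∑ t : Fin m, (if s = t.castSucc then 1 else 0) * r t := by
  unfold tterm
  congr 1
  induction s using Fin.lastCases with
  | last =>
    rw [Fin.snoc_last, Finset.sum_eq_zero]
    intro t _
    rw [if_neg (Fin.castSucc_lt_last t).ne', zero_mul]
  | cast t => simp

lemma closed_range_tropPhi (K : Type*) [NormedField K] {N m : ℕ}
    (B : Matrix (Fin N) (Fin (m + 1)) ℤ) (c : Fin N → Fin (m + 1) → ℚ)
    (hc : ∀ i, ∃ s, c i s ≠ 0) : IsClosed (Set.range (tropPhi K B c)) := by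
  classical
  have h : Set.range (tropPhi K B c) = ⋃ σ : {σ : Fin N → Fin (m + 1) // ∀ i, c i (σ i) ≠ 0},
      {y | ∃ r : Fin m → ℝ, (∀ i s, c i s ≠ 0 → tterm K (c i) r (σ.1 i) ≤ tterm K (c i) r s) ∧
        ∀ ℓ, y ℓ = ∑ i, (B i ℓ : ℝ) * tterm K (c i) r (σ.1 i)} := by
    ext y
    simp only [Set.mem_range, Set.mem_iUnion, Set.mem_ofPred_eq]
    constructor
    · rintro ⟨r, rfl⟩
      choose σ hσ hm using fun i => exists_least K (c i) (hc i) r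
      refine ⟨⟨σ, hσ⟩, r, hm, fun ℓ => ?_⟩
      rw [tropPhi_eq_of_isLeast K B c r (fun i => tterm K (c i) r (σ i))]
      rintro i
      refine ⟨⟨_, hσ i, rfl⟩, ?_⟩
      rintro x ⟨s, hs, rfl⟩
      exact hm i s hs
    · rintro ⟨σ, r, hm, hy⟩
      refine ⟨r, ?_⟩
      rw [tropPhi_eq_of_isLeast K B c r (fun i => tterm K (c i) r (σ.1 i))]
      · funext ℓ
        exact (hy ℓ).symm
      · rintro i
        refine ⟨⟨_, σ.2 i, rfl⟩, ?_⟩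
        rintro x ⟨s, hs, rfl⟩
        exact hm i s hs
  rw [h]
  refine isClosed_iUnion_of_finite fun σ => ?_
  let e : Fin (m + 1) → Fin m → ℝ := fun s t => if s = t.castSucc then 1 else 0
  let v : Fin N → Fin (m + 1) → ℝ := fun i s => nuVal K ((c i s : ℚ) : K)
  let ι : Type := {q : Fin N × Fin (m + 1) // c q.1 q.2 ≠ 0} ⊕ (Fin (m + 1) ⊕ Fin (m + 1))
  let g : ι → (Fin (m + 1) → ℝ) → ℝ := fun k y =>
    Sum.elim (fun q => v q.1.1 q.1.2 - v q.1.1 (σ.1 q.1.1))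
      (Sum.elim (fun ℓ => y ℓ - ∑ i, (B i ℓ : ℝ) * v i (σ.1 i))
        (fun ℓ => -(y ℓ - ∑ i, (B i ℓ : ℝ) * v i (σ.1 i)))) k
  let a : ι → Fin m → ℝ := fun k t =>
    Sum.elim (fun q => e (σ.1 q.1.1) t - e q.1.2 t)
      (Sum.elim (fun ℓ => ∑ i, (B i ℓ : ℝ) * e (σ.1 i) t)
        (fun ℓ => -(∑ i, (B i ℓ : ℝ) * e (σ.1 i) t))) k
  have hg : ∀ k, Continuous (g k) := by
    rintro (q | ℓ | ℓ)
    · exact continuous_const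
    · exact (continuous_apply ℓ).sub continuous_const
    · exact ((continuous_apply ℓ).sub continuous_const).neg
  convert fourier_motzkin_closed m ι g hg a using 1
  ext y
  simp only [Set.mem_ofPred_eq]
  refine exists_congr fun r => ?_
  have ht : ∀ i s, tterm K (c i) r s = v i s + ∑ t, e s t * r t := fun i s => tterm_lin K (c i) s r
  have hs : ∀ ℓ, ∑ i, (B i ℓ : ℝ) * tterm K (c i) r (σ.1 i) =
      ∑ i, (B i ℓ : ℝ) * v i (σ.1 i) + ∑ t, (∑ i, (B i ℓ : ℝ) * e (σ.1 i) t) * r t := by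
    intro ℓ
    simp only [ht, mul_add, Finset.sum_add_distrib, Finset.mul_sum, Finset.sum_mul]
    congr 1
    rw [Finset.sum_comm]
    simp only [mul_assoc]
  simp only [hs]
  simp only [ht]
  constructor
  · rintro ⟨h1, h2⟩ (q | ℓ | ℓ)
    · have := h1 q.1.1 q.1.2 q.2
      simp only [g, a, Sum.elim_inl, sub_mul, Finset.sum_sub_distrib]
      linarith
    · have := h2 ℓ
      simp only [g, a, Sum.elim_inl, Sum.elim_inr]
      linarith
    · have := h2 ℓ
      simp only [g, a, Sum.elim_inr, neg_mul, Finset.sum_neg_distrib]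
      linarith
  · intro h
    refine ⟨fun i s hs => ?_, fun ℓ => ?_⟩
    · have := h (Sum.inl ⟨(i, s), hs⟩)
      simp only [g, a, Sum.elim_inl, sub_mul, Finset.sum_sub_distrib] at this
      linarith
    · have h1 := h (Sum.inr (Sum.inl ℓ))
      have h2 := h (Sum.inr (Sum.inr ℓ))
      simp only [g, a, Sum.elim_inl, Sum.elim_inr, neg_mul, Finset.sum_neg_distrib] at h1 h2
      linarith

lemma nuVal_mul (K : Type*) [NormedField K] {x y : K} (hx : x ≠ 0) (hy : y ≠ 0) :
    nuVal K (x * y) = nuVal K x + nuVal K y := by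
  unfold nuVal
  rw [norm_mul, Real.log_mul (norm_ne_zero_iff.2 hx) (norm_ne_zero_iff.2 hy)]
  ring

lemma nuVal_anti (K : Type*) [NormedField K] {x y : K} (hx : x ≠ 0) (h : ‖x‖ ≤ ‖y‖) :
    nuVal K y ≤ nuVal K x := by
  unfold nuVal
  have := Real.log_le_log (norm_pos_iff.2 hx) h
  linarith

lemma affForm_eq_sum (K : Type*) [NormedField K] {N m : ℕ}
    (B : Matrix (Fin N) (Fin (m + 1)) ℤ) (i : Fin N) (x : Fin m → K) :
    affForm K B i x = ∑ s, (B i s : K) * (Fin.snoc x 1 : Fin (m + 1) → K) s := by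
  rw [Fin.sum_univ_castSucc]
  simp [affForm]

/-- Generic points: the valuation of the sum is the tropical minimum. -/
lemma val_generic (K : Type*) [NormedField K] [CharZero K] [IsUltrametricDist K]
    (hQint : ∀ q : ℚ, q ≠ 0 → ∃ z : ℤ, nuVal K ((q : K)) = (z : ℝ))
    {m : ℕ} (d : Fin (m + 1) → ℚ) (hd : ∃ s, d s ≠ 0) (r : Fin m → ℝ)
    (hr : ∀ s s' : Fin (m + 1), s ≠ s' → ∀ z : ℤ,
      (Fin.snoc r 0 : Fin (m + 1) → ℝ) s - (Fin.snoc r 0 : Fin (m + 1) → ℝ) s' ≠ z)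
    (x : Fin m → K) (hx : ∀ t, x t ≠ 0) (hxr : ∀ t, nuVal K (x t) = r t) :
    (∑ t : Fin m, ((d t.castSucc : ℚ) : K) * x t) + ((d (Fin.last m) : ℚ) : K) ≠ 0 ∧
    IsLeast {y : ℝ | ∃ s, d s ≠ 0 ∧ y = tterm K d r s}
      (nuVal K ((∑ t : Fin m, ((d t.castSucc : ℚ) : K) * x t) + ((d (Fin.last m) : ℚ) : K))) := by
  classical
  set x' : Fin (m + 1) → K := Fin.snoc x 1 with hx'
  have hx0 : ∀ s, x' s ≠ 0 := by
    intro s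
    induction s using Fin.lastCases with
    | last => simp [x']
    | cast t => simpa [x'] using hx t
  have hxv : ∀ s, nuVal K (x' s) = (Fin.snoc r 0 : Fin (m + 1) → ℝ) s := by
    intro s
    induction s using Fin.lastCases with
    | last => simp [x', nuVal]
    | cast t => simpa [x'] using hxr t
  have hdK : ∀ s, d s ≠ 0 → ((d s : ℚ) : K) ≠ 0 := fun s hs => by exact_mod_cast hs
  have htt : ∀ s, d s ≠ 0 → tterm K d r s = nuVal K ((d s : K) * x' s) := by
    intro s hs
    rw [nuVal_mul K (hdK s hs) (hx0 s), hxv]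
    rfl
  set S := Finset.univ.filter (fun s => d s ≠ 0) with hS
  have hSne : S.Nonempty := by
    obtain ⟨s, hs⟩ := hd
    exact ⟨s, by simp [S, hs]⟩
  have hsum : (∑ t : Fin m, ((d t.castSucc : ℚ) : K) * x t) + ((d (Fin.last m) : ℚ) : K)
      = ∑ s ∈ S, (d s : K) * x' s := by
    rw [hS, Finset.sum_filter_of_ne, Fin.sum_univ_castSucc]
    · simp [x']
    · intro s _ h h0
      simp [h0] at h
  have hpw : Set.Pairwise (S : Set (Fin (m + 1)))
      (fun i j ↦ ‖(d i : K) * x' i‖ ≠ ‖(d j : K) * x' j‖) := by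
    intro s hs s' hs' hne heq
    have hs1 : d s ≠ 0 := by simpa [S] using hs
    have hs2 : d s' ≠ 0 := by simpa [S] using hs'
    have h1 : tterm K d r s = tterm K d r s' := by
      rw [htt s hs1, htt s' hs2]
      unfold nuVal
      rw [heq]
    obtain ⟨z, hz⟩ := hQint _ hs1
    obtain ⟨z', hz'⟩ := hQint _ hs2
    unfold tterm at h1
    rw [hz, hz'] at h1
    apply hr s s' hne (z' - z)
    push_cast
    linarith
  rw [hsum]
  have hnorm := IsUltrametricDist.norm_sum_eq_sup'_of_pairwise_ne hSne hpw
  obtain ⟨s0, hs0, hs0'⟩ := Finset.exists_mem_eq_sup' hSne (fun i ↦ ‖(d i : K) * x' i‖)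
  have hs01 : d s0 ≠ 0 := by simpa [S] using hs0
  rw [hs0'] at hnorm
  refine ⟨?_, ⟨s0, hs01, ?_⟩, ?_⟩
  · rw [← norm_ne_zero_iff, hnorm, norm_ne_zero_iff]
    exact mul_ne_zero (hdK s0 hs01) (hx0 s0)
  · rw [htt s0 hs01]
    unfold nuVal
    rw [hnorm]
  · rintro y ⟨s, hs, rfl⟩
    rw [htt s hs]
    apply nuVal_anti K (mul_ne_zero (hdK s hs) (hx0 s))
    rw [hnorm, ← hs0']
    exact Finset.le_sup' (fun i ↦ ‖(d i : K) * x' i‖) (by simp [S, hs])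

/-- Rational approximations with pairwise distinct fractional parts. -/
noncomputable def approxQ {m : ℕ} (r : Fin m → ℝ) (k : ℕ) (t : Fin m) : ℚ :=
  ((⌊r t * ((k : ℝ) + 1)⌋ : ℚ) + ((t : ℕ) + 1 : ℚ) / (m + 2)) / (k + 1)

lemma approxQ_generic {m : ℕ} (r : Fin m → ℝ) (k : ℕ) (s s' : Fin (m + 1)) (hne : s ≠ s') (z : ℤ) :
    (Fin.snoc (fun t => (approxQ r k t : ℝ)) 0 : Fin (m + 1) → ℝ) s -
      (Fin.snoc (fun t => (approxQ r k t : ℝ)) 0 : Fin (m + 1) → ℝ) s' ≠ z := by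
  have key : ∀ s : Fin (m + 1), ∃ n a : ℤ, 0 ≤ a ∧ a < m + 2 ∧
      (Fin.snoc (fun t => (approxQ r k t : ℝ)) 0 : Fin (m + 1) → ℝ) s * ((k + 1) * (m + 2))
        = n * (m + 2) + a ∧ a = (((s : ℕ) : ℤ) + 1) % (m + 1) ∧
        (s = Fin.last m → a = 0) ∧ (s ≠ Fin.last m → a = (s : ℕ) + 1) := by
    intro s
    induction s using Fin.lastCases with
    | last => exact ⟨0, 0, by positivity, by positivity, by simp, by simp, by simp, by simp⟩
    | cast t =>
      have ht := t.2
      refine ⟨⌊r t * ((k : ℝ) + 1)⌋, (t : ℕ) + 1, by positivity, by omega, ?_, ?_, ?_, ?_⟩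
      · simp only [Fin.snoc_castSucc, approxQ]
        push_cast
        have : (m : ℝ) + 2 ≠ 0 := by positivity
        have : (k : ℝ) + 1 ≠ 0 := by positivity
        field_simp
      · simp only [Fin.val_castSucc]
        rw [Int.emod_eq_of_lt] <;> omega
      · intro h
        exact absurd h (Fin.castSucc_lt_last t).ne
      · simp
  intro h
  obtain ⟨n, a, ha0, ha1, he, -, hl, hnl⟩ := key s
  obtain ⟨n', a', ha0', ha1', he', -, hl', hnl'⟩ := key s'
  have h1 : ((z * (k + 1) * (m + 2) : ℤ) : ℝ) = ((n - n') * (m + 2) + (a - a') : ℤ) := by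
    push_cast
    rw [← h]
    linarith
  have h2 : z * (k + 1) * (m + 2) = (n - n') * (m + 2) + (a - a') := by exact_mod_cast h1
  have h3 : a - a' = 0 := by
    have hdvd : ((m : ℤ) + 2) ∣ a - a' := ⟨z * (k + 1) - (n - n'), by linarith⟩
    refine Int.eq_zero_of_abs_lt_dvd hdvd ?_
    rw [abs_lt]
    constructor <;> linarith
  apply hne
  by_cases h4 : s = Fin.last m <;> by_cases h5 : s' = Fin.last m
  · rw [h4, h5]
  · have := hl h4
    have := hnl' h5
    omega
  · have := hl' h5
    have := hnl h4
    omega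
  · have := hnl h4
    have := hnl' h5
    apply Fin.ext
    omega

lemma approxQ_tendsto {m : ℕ} (r : Fin m → ℝ) :
    Filter.Tendsto (fun k : ℕ => fun t => (approxQ r k t : ℝ)) Filter.atTop (nhds r) := by
  rw [tendsto_pi_nhds]
  intro t
  rw [tendsto_iff_norm_sub_tendsto_zero]
  refine squeeze_zero (fun _ => norm_nonneg _) (g := fun k : ℕ => 1 / ((k : ℝ) + 1)) ?_
    tendsto_one_div_add_atTop_nhds_zero_nat
  intro k
  have hk : (0 : ℝ) < (k : ℝ) + 1 := by positivity
  have ht : ((t : ℕ) : ℝ) + 1 ≤ m := by exact_mod_cast t.2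
  have h1 : (((t : ℕ) : ℝ) + 1) / (m + 2) ≤ 1 := by
    rw [div_le_one (by positivity)]
    linarith
  have h0 : 0 ≤ (((t : ℕ) : ℝ) + 1) / (m + 2) := by positivity
  have hf1 := Int.floor_le (r t * ((k : ℝ) + 1))
  have hf2 := Int.lt_floor_add_one (r t * ((k : ℝ) + 1))
  have he : (approxQ r k t : ℝ) - r t = ((⌊r t * ((k : ℝ) + 1)⌋ : ℝ) - r t * (k + 1)
      + (((t : ℕ) : ℝ) + 1) / (m + 2)) / (k + 1) := by
    unfold approxQ
    push_cast
    field_simp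
    ring
  rw [he, norm_div, Real.norm_of_nonneg hk.le]
  gcongr
  rw [Real.norm_eq_abs, abs_le]
  constructor <;> linarith

lemma rows_ne_zero (K : Type*) [NormedField K] [CharZero K] {N m : ℕ}
    (B : Matrix (Fin N) (Fin (m + 1)) ℤ) (hrows : ∀ i, ∃ ℓ, B i ℓ ≠ 0)
    (T : (Fin m → K) → (Fin m → K)) (hT : Function.Bijective T)
    (c : Fin N → Fin (m + 1) → ℚ)
    (hc : ∀ (i : Fin N) (x : Fin m → K), affForm K B i (T x)
      = (∑ t : Fin m, ((c i t.castSucc : ℚ) : K) * x t) + ((c i (Fin.last m) : ℚ) : K)) (i : Fin N) :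
    ∃ s, c i s ≠ 0 := by
  classical
  by_contra! h
  have h0 : ∀ y, affForm K B i y = 0 := by
    intro y
    obtain ⟨x, rfl⟩ := hT.2 y
    rw [hc]
    simp [h]
  have hl : B i (Fin.last m) = 0 := by
    have := h0 0
    simpa [affForm] using this
  obtain ⟨ℓ, hℓ⟩ := hrows i
  apply hℓ
  induction ℓ using Fin.lastCases with
  | last => exact hl
  | cast t =>
    have := h0 (Pi.single t 1)
    simpa [affForm, hl, Pi.single_apply] using this

/-- The inclusion of the tropical images into the closure. -/
lemma trop_mem_closure (K : Type*) [NormedField K] [CharZero K] [IsUltrametricDist K]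
    (hQsub : ∀ q : ℚ, ∃ x : K, x ≠ 0 ∧ nuVal K x = (q : ℝ))
    (hQint : ∀ q : ℚ, q ≠ 0 → ∃ z : ℤ, nuVal K ((q : K)) = (z : ℝ)) {N m : ℕ}
    (B : Matrix (Fin N) (Fin (m + 1)) ℤ) (hrows : ∀ i, ∃ ℓ, B i ℓ ≠ 0)
    (T : (Fin m → K) → (Fin m → K)) (hT : Function.Bijective T)
    (c : Fin N → Fin (m + 1) → ℚ)
    (hc : ∀ (i : Fin N) (x : Fin m → K), affForm K B i (T x)
      = (∑ t : Fin m, ((c i t.castSucc : ℚ) : K) * x t) + ((c i (Fin.last m) : ℚ) : K))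
    (r : Fin m → ℝ) :
    tropPhi K B c r ∈ closure (Fmap K B '' {lam | ∀ i, affForm K B i lam ≠ 0}) := by
  have hne := rows_ne_zero K B hrows T hT c hc
  refine mem_closure_of_tendsto
    (((continuous_tropPhi K B c hne).tendsto r).comp (approxQ_tendsto r))
    (Filter.Eventually.of_forall fun k => ?_)
  choose x hx hxr using fun t => hQsub (approxQ r k t)
  have hv := fun i => val_generic K hQint (c i) (hne i) (fun t => (approxQ r k t : ℝ))
    (approxQ_generic r k) x hx hxr
  refine ⟨T x, fun i => ?_, ?_⟩
  · rw [hc]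
    exact (hv i).1
  · rw [Function.comp_apply, tropPhi_eq_of_isLeast K B c _ _ fun i => (hv i).2]
    funext ℓ
    simp only [Fmap, hc]

/-- The square matrix of the rows selected by `J`. -/
noncomputable def selM {N m : ℕ} (B : Matrix (Fin N) (Fin (m + 1)) ℤ) (J : Fin (m + 1) → Fin N) :
    Matrix (Fin (m + 1)) (Fin (m + 1)) ℚ := Matrix.of fun j s => (B (J j) s : ℚ)

/-- Coordinates of row `i` in the basis `J`. -/
noncomputable def coA {N m : ℕ} (B : Matrix (Fin N) (Fin (m + 1)) ℤ) (J : Fin (m + 1) → Fin N)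
    (i : Fin N) (j : Fin (m + 1)) : ℚ := ∑ s, (B i s : ℚ) * (selM B J)⁻¹ s j

/-- Coordinates of the last unit vector in the basis `J`. -/
noncomputable def coG {N m : ℕ} (B : Matrix (Fin N) (Fin (m + 1)) ℤ) (J : Fin (m + 1) → Fin N)
    (j : Fin (m + 1)) : ℚ := (selM B J)⁻¹ (Fin.last m) j

/-- Coordinates of row `i` after exchanging `j0` with the last unit vector. -/
noncomputable def coC {N m : ℕ} (B : Matrix (Fin N) (Fin (m + 1)) ℤ) (J : Fin (m + 1) → Fin N)
    (j0 : Fin (m + 1)) (i : Fin N) : Fin (m + 1) → ℚ :=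
  Fin.snoc (fun t => coA B J i (j0.succAbove t) - coA B J i j0 * coG B J (j0.succAbove t) / coG B J j0)
    (coA B J i j0 / coG B J j0)

lemma coA_spec {N m : ℕ} (B : Matrix (Fin N) (Fin (m + 1)) ℤ) (J : Fin (m + 1) → Fin N)
    (hJ : (selM B J).det ≠ 0) (i : Fin N) (s : Fin (m + 1)) :
    (B i s : ℚ) = ∑ j, coA B J i j * (B (J j) s : ℚ) := by
  have h : (selM B J)⁻¹ * selM B J = 1 := Matrix.nonsing_inv_mul _ (isUnit_iff_ne_zero.2 hJ)
  have h2 : ∀ u, ∑ j, (selM B J)⁻¹ u j * (B (J j) s : ℚ) = if u = s then 1 else 0 := by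
    intro u
    have := congrFun (congrFun h u) s
    rw [Matrix.mul_apply, Matrix.one_apply] at this
    exact this
  simp only [coA, Finset.sum_mul]
  rw [Finset.sum_comm]
  simp only [mul_assoc, ← Finset.mul_sum, h2]
  simp

lemma coG_spec {N m : ℕ} (B : Matrix (Fin N) (Fin (m + 1)) ℤ) (J : Fin (m + 1) → Fin N)
    (hJ : (selM B J).det ≠ 0) (s : Fin (m + 1)) :
    (if Fin.last m = s then (1 : ℚ) else 0) = ∑ j, coG B J j * (B (J j) s : ℚ) := by
  have h : (selM B J)⁻¹ * selM B J = 1 := Matrix.nonsing_inv_mul _ (isUnit_iff_ne_zero.2 hJ)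
  have := congrFun (congrFun h (Fin.last m)) s
  rw [Matrix.mul_apply, Matrix.one_apply] at this
  exact this.symm

lemma coC_spec {N m : ℕ} (B : Matrix (Fin N) (Fin (m + 1)) ℤ) (J : Fin (m + 1) → Fin N)
    (hJ : (selM B J).det ≠ 0) (j0 : Fin (m + 1)) (hg : coG B J j0 ≠ 0) (i : Fin N)
    (s : Fin (m + 1)) :
    (B i s : ℚ) = ∑ t : Fin m, coC B J j0 i t.castSucc * (B (J (j0.succAbove t)) s : ℚ)
      + coC B J j0 i (Fin.last m) * (if Fin.last m = s then (1 : ℚ) else 0) := by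
  rw [coG_spec B J hJ, coA_spec B J hJ i s, Fin.sum_univ_succAbove _ j0,
    Fin.sum_univ_succAbove (fun j => coG B J j * (B (J j) s : ℚ)) j0]
  simp only [coC, Fin.snoc_castSucc, Fin.snoc_last, mul_add, Finset.mul_sum]
  have h1 : coA B J i j0 / coG B J j0 * (coG B J j0 * (B (J j0) s : ℚ))
      = coA B J i j0 * (B (J j0) s : ℚ) := by
    field_simp
  rw [h1, add_left_comm, ← Finset.sum_add_distrib]
  congr 1
  refine Finset.sum_congr rfl fun t _ => ?_
  ring

lemma admissible_of {N m : ℕ} (B : Matrix (Fin N) (Fin (m + 1)) ℤ) (J : Fin (m + 1) → Fin N)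
    (hmono : StrictMono J) (j0 : Fin (m + 1)) (hg : coG B J j0 ≠ 0) :
    Admissible B (fun t => J (j0.succAbove t)) := by
  refine ⟨hmono.comp (Fin.strictMono_succAbove j0), fun h0 => hg ?_⟩
  rw [coG, Matrix.inv_def, Matrix.smul_apply, Matrix.adjugate_fin_succ_eq_det_submatrix]
  have : (selM B J).submatrix j0.succAbove (Fin.last m).succAbove
      = Matrix.of fun j t : Fin m => (B (J (j0.succAbove j)) t.castSucc : ℚ) := by
    ext j t
    simp [selM]
  rw [this, h0]
  simp

/-- Existence of the affine bijection. -/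
lemma exists_T (K : Type*) [NormedField K] [CharZero K] {N m : ℕ}
    (B : Matrix (Fin N) (Fin (m + 1)) ℤ) (I : Fin m → Fin N) (hI : Admissible B I)
    (c : Fin N → Fin (m + 1) → ℚ)
    (hc : ∀ i s, (B i s : ℚ) = ∑ t : Fin m, c i t.castSucc * (B (I t) s : ℚ)
      + c i (Fin.last m) * (if Fin.last m = s then (1 : ℚ) else 0)) :
    ∃ T : (Fin m → K) → (Fin m → K), Function.Bijective T ∧
      (∀ (x : Fin m → K) (j : Fin m), affForm K B (I j) (T x) = x j) ∧
      (∀ (i : Fin N) (x : Fin m → K), affForm K B i (T x)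
        = (∑ t : Fin m, ((c i t.castSucc : ℚ) : K) * x t) + ((c i (Fin.last m) : ℚ) : K)) := by
  set A : Matrix (Fin m) (Fin m) K := Matrix.of fun j t => (B (I j) t.castSucc : K) with hA
  have hdet : A.det ≠ 0 := by
    have h1 : A = ((Rat.castHom K).mapMatrix
        (Matrix.of fun j t : Fin m => (B (I j) t.castSucc : ℚ))) := by
      ext j t
      simp [A]
    rw [h1, ← RingHom.map_det]
    intro h
    exact hI.2 ((map_eq_zero (Rat.castHom K)).1 h)
  have hu : IsUnit A.det := isUnit_iff_ne_zero.2 hdet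
  set b : Fin m → K := fun j => (B (I j) (Fin.last m) : K) with hb
  have haff : ∀ y j, affForm K B (I j) y = (A.mulVec y + b) j := by
    intro y j
    simp [affForm, A, b, Matrix.mulVec, dotProduct]
  set T : (Fin m → K) → (Fin m → K) := fun x => A⁻¹.mulVec (x - b) with hT
  have hT1 : ∀ (x : Fin m → K) (j : Fin m), affForm K B (I j) (T x) = x j := by
    intro x j
    rw [haff]
    simp [T, Matrix.mulVec_mulVec, Matrix.mul_nonsing_inv _ hu]
  refine ⟨T, ⟨?_, ?_⟩, hT1, ?_⟩
  · intro x y hxy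
    funext j
    rw [← hT1 x j, hxy, hT1]
  · intro y
    refine ⟨A.mulVec y + b, ?_⟩
    simp [T, Matrix.mulVec_mulVec, Matrix.nonsing_inv_mul _ hu]
  · intro i x
    have hcK : ∀ s, (B i s : K) = ∑ t : Fin m, (c i t.castSucc : K) * (B (I t) s : K)
      + (c i (Fin.last m) : K) * (if Fin.last m = s then (1 : K) else 0) := by
      intro s
      have := congrArg (Rat.cast : ℚ → K) (hc i s)
      push_cast [apply_ite (Rat.cast : ℚ → K)] at this
      exact this
    have h2 : ∀ y, affForm K B i y = ∑ t : Fin m, (c i t.castSucc : K) * affForm K B (I t) y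
        + (c i (Fin.last m) : K) := by
      intro y
      simp only [affForm_eq_sum, hcK, add_mul, Finset.sum_add_distrib, Finset.sum_mul,
        Finset.mul_sum]
      rw [Finset.sum_comm]
      simp [mul_assoc]
    rw [h2]
    simp only [hT1]

lemma exists_det_ne {N m : ℕ} (B : Matrix (Fin N) (Fin (m + 1)) ℤ)
    (hrank : (B.map (Int.cast : ℤ → ℚ)).rank = m + 1) : ∃ J, (selM B J).det ≠ 0 := by
  rw [Matrix.rank_eq_finrank_span_row] at hrank
  obtain ⟨f, hf, -, hli⟩ := Submodule.exists_fun_fin_finrank_span_eq ℚ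
    (Set.range (B.map (Int.cast : ℤ → ℚ)).row)
  generalize Module.finrank ℚ (Submodule.span ℚ (Set.range (B.map (Int.cast : ℤ → ℚ)).row)) = k
    at hrank f hf hli
  subst hrank
  choose J hJ using hf
  refine ⟨J, ?_⟩
  have h : selM B J = Matrix.of f := by
    ext j s
    rw [Matrix.of_apply, ← hJ j]
    simp [selM]
  rw [h, ← isUnit_iff_ne_zero, ← Matrix.isUnit_iff_isUnit_det,
    ← Matrix.linearIndependent_rows_iff_isUnit]
  exact hli

/-- The exchange step. -/
lemma exchange (K : Type*) [NormedField K] [IsUltrametricDist K] {m : ℕ}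
    (a g : Fin (m + 1) → K) (ρ : Fin (m + 1) → ℝ) (hρ : ∀ j, 0 < ρ j) (ρi : ℝ)
    (ha : ∀ j, ‖a j‖ * ρ j ≤ ρi) (hatt : ∃ j, ‖a j‖ * ρ j = ρi) (j0 : Fin (m + 1))
    (hg0 : g j0 ≠ 0) (hg : ∀ j, ‖g j‖ * ρ j ≤ ‖g j0‖ * ρ j0)
    (c : Fin (m + 1) → K)
    (hcl : c (Fin.last m) = a j0 / g j0)
    (hct : ∀ t : Fin m, c t.castSucc = a (j0.succAbove t) - a j0 * g (j0.succAbove t) / g j0)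
    (ρ' : Fin (m + 1) → ℝ) (hρl : ρ' (Fin.last m) = ‖g j0‖ * ρ j0)
    (hρt : ∀ t : Fin m, ρ' t.castSucc = ρ (j0.succAbove t)) :
    (∀ s, ‖c s‖ * ρ' s ≤ ρi) ∧ ∃ s, ‖c s‖ * ρ' s = ρi := by
  have hgn : 0 < ‖g j0‖ := norm_pos_iff.2 hg0
  have hl : ‖c (Fin.last m)‖ * ρ' (Fin.last m) = ‖a j0‖ * ρ j0 := by
    rw [hcl, hρl, norm_div]
    field_simp
  have h2 : ∀ j, ‖a j0 * g j / g j0‖ * ρ j ≤ ‖a j0‖ * ρ j0 := by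
    intro j
    have := mul_le_mul_of_nonneg_left (hg j) (norm_nonneg (a j0))
    rw [norm_div, norm_mul, div_mul_eq_mul_div, div_le_iff₀ hgn]
    linarith
  constructor
  · intro s
    induction s using Fin.lastCases with
    | last => rw [hl]; exact ha j0
    | cast t =>
      rw [hct, hρt]
      have h3 := IsUltrametricDist.norm_add_le_max (a (j0.succAbove t))
        (-(a j0 * g (j0.succAbove t) / g j0))
      rw [norm_neg, ← sub_eq_add_neg] at h3
      refine (mul_le_mul_of_nonneg_right h3 (hρ _).le).trans ?_
      rw [max_mul_of_nonneg _ _ (hρ _).le]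
      exact max_le (ha _) ((h2 _).trans (ha j0))
  · rcases (ha j0).lt_or_eq with hlt | heq
    · obtain ⟨j, hj⟩ := hatt
      rcases Fin.eq_self_or_eq_succAbove j0 j with rfl | ⟨t, rfl⟩
      · exact absurd hj hlt.ne
      · refine ⟨t.castSucc, ?_⟩
        rw [hct, hρt]
        have h4 : ‖a j0 * g (j0.succAbove t) / g j0‖ < ‖a (j0.succAbove t)‖ := by
          refine lt_of_mul_lt_mul_right ?_ (hρ (j0.succAbove t)).le
          rw [hj]
          exact (h2 _).trans_lt hlt
        rw [sub_eq_add_neg, IsUltrametricDist.norm_add_eq_max_of_norm_ne_norm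
          (by rw [norm_neg]; exact h4.ne'), norm_neg, max_eq_left h4.le, hj]
    · exact ⟨Fin.last m, by rw [hl, heq]⟩

/-- Existence of an optimal basis. -/
lemma exists_optimal (K : Type*) [NormedField K] [CharZero K] {N m : ℕ}
    (B : Matrix (Fin N) (Fin (m + 1)) ℤ)
    (hrank : (B.map (Int.cast : ℤ → ℚ)).rank = m + 1) (ρ : Fin N → ℝ) (hρ : ∀ i, 0 < ρ i) :
    ∃ J : Fin (m + 1) → Fin N, StrictMono J ∧ (selM B J).det ≠ 0 ∧
      ∀ i j, ‖(coA B J i j : K)‖ * ρ (J j) ≤ ρ i := by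
  classical
  let Q : (Fin (m + 1) → Fin N) → ℝ := fun J => ‖((selM B J).det : K)‖ / ∏ j, ρ (J j)
  have hP : ∀ J : Fin (m + 1) → Fin N, 0 < ∏ j, ρ (J j) :=
    fun J => Finset.prod_pos fun j _ => hρ _
  obtain ⟨J0, hJ0⟩ := exists_det_ne B hrank
  have : Nonempty (Fin (m + 1) → Fin N) := ⟨J0⟩
  obtain ⟨J1, hJ1⟩ := Finite.exists_max Q
  have hperm : ∀ (J : Fin (m + 1) → Fin N) (σ : Equiv.Perm (Fin (m + 1))), Q (J ∘ σ) = Q J := by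
    intro J σ
    have h1 : selM B (J ∘ σ) = (selM B J).submatrix σ id := by
      ext j s
      simp [selM]
    have h2 : ∏ j, ρ ((J ∘ σ) j) = ∏ j, ρ (J j) := Equiv.prod_comp σ (fun j => ρ (J j))
    simp only [Q]
    rw [h2, h1, Matrix.det_permute]
    rcases Int.units_eq_one_or (Equiv.Perm.sign σ) with h | h <;> simp [h]
  set J := J1 ∘ Tuple.sort J1 with hJdef
  have hmax : ∀ J', Q J' ≤ Q J := fun J' => by rw [hJdef, hperm]; exact hJ1 J'
  have hpos : 0 < Q J := by
    refine lt_of_lt_of_le ?_ (hmax J0)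
    refine div_pos (norm_pos_iff.2 ?_) (hP J0)
    exact_mod_cast hJ0
  have hdet : (selM B J).det ≠ 0 := by
    intro h
    simp [Q, h] at hpos
  have hinj : Function.Injective J := by
    intro j j' h
    by_contra hne
    apply hdet
    apply Matrix.det_zero_of_row_eq hne
    funext s
    simp [selM, h]
  refine ⟨J, (Tuple.monotone_sort J1).strictMono_of_injective hinj, hdet, fun i j => ?_⟩
  have hM : selM B (Function.update J j i)
      = (selM B J).updateRow j (∑ k, coA B J i k • (selM B J) k) := by
    ext k s
    rw [Matrix.updateRow_apply]
    split_ifs with h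
    · subst h
      simp only [selM, Matrix.of_apply, Function.update_self, Finset.sum_apply, Pi.smul_apply,
        smul_eq_mul]
      exact coA_spec B J hdet i s
    · simp [selM, Function.update_of_ne h]
  have h1 := hmax (Function.update J j i)
  simp only [Q] at h1
  rw [hM, Matrix.det_updateRow_sum, div_le_div_iff₀ (hP _) (hP _)] at h1
  rw [Fin.prod_univ_succAbove _ j, Fin.prod_univ_succAbove (fun k => ρ (Function.update J j i k)) j]
    at h1
  have h3 : ∀ t, Function.update J j i (j.succAbove t) = J (j.succAbove t) :=
    fun t => Function.update_of_ne (Fin.succAbove_ne j t) _ _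
  simp only [h3, Function.update_self, smul_eq_mul, Rat.cast_mul, norm_mul] at h1
  have hd : 0 < ‖((selM B J).det : K)‖ := norm_pos_iff.2 (by exact_mod_cast hdet)
  have hp : 0 < ∏ t, ρ (J (j.succAbove t)) := Finset.prod_pos fun _ _ => hρ _
  refine le_of_mul_le_mul_right ?_ (mul_pos hd hp)
  calc _ = _ := by ring
    _ ≤ _ := h1
    _ = _ := by ring

lemma Fmap_mem (K : Type*) [NormedField K] [CharZero K] [IsUltrametricDist K] {N m : ℕ}
    (B : Matrix (Fin N) (Fin (m + 1)) ℤ)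
    (hrank : (B.map (Int.cast : ℤ → ℚ)).rank = m + 1)
    (hcols : ∀ ℓ, (∑ i, B i ℓ) = 0)
    (lam : Fin m → K) (hlam : ∀ i, affForm K B i lam ≠ 0) :
    ∃ J j0, StrictMono J ∧ (selM B J).det ≠ 0 ∧ coG B J j0 ≠ 0 ∧
      Fmap K B lam ∈ Set.range (tropPhi K B (coC B J j0)) := by
  set ρ : Fin N → ℝ := fun i => ‖affForm K B i lam‖ with hρdef
  have hρ : ∀ i, 0 < ρ i := fun i => norm_pos_iff.2 (hlam i)
  obtain ⟨J, hmono, hdet, hopt⟩ := exists_optimal K B hrank ρ hρ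
  have hlin : ∀ i, affForm K B i lam = ∑ j, (coA B J i j : K) * affForm K B (J j) lam := by
    intro i
    have hK : ∀ s, (B i s : K) = ∑ j, (coA B J i j : K) * (B (J j) s : K) := by
      intro s
      have := congrArg (Rat.cast : ℚ → K) (coA_spec B J hdet i s)
      push_cast at this
      exact this
    simp only [affForm_eq_sum, Finset.mul_sum, hK, Finset.sum_mul]
    rw [Finset.sum_comm]
    simp only [mul_assoc]
  have hatt : ∀ i, ∃ j, ‖(coA B J i j : K)‖ * ρ (J j) = ρ i := by
    intro i
    obtain ⟨j, -, hj⟩ := IsUltrametricDist.exists_norm_finsetSum_le_of_nonempty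
      (Finset.univ_nonempty (α := Fin (m + 1)))
      (fun j => (coA B J i j : K) * affForm K B (J j) lam)
    rw [← hlin, norm_mul] at hj
    exact ⟨j, le_antisymm (hopt i j) hj⟩
  obtain ⟨j0, hj0⟩ := Finite.exists_max (fun j => ‖(coG B J j : K)‖ * ρ (J j))
  have hg0 : coG B J j0 ≠ 0 := by
    intro h
    have hz : ∀ j, coG B J j = 0 := by
      intro j
      have h1 := hj0 j
      simp only [h, Rat.cast_zero, norm_zero, zero_mul] at h1
      by_contra hne
      have : 0 < ‖(coG B J j : K)‖ := norm_pos_iff.2 (by exact_mod_cast hne)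
      exact absurd h1 (not_le.2 (mul_pos this (hρ _)))
    have := coG_spec B J hdet (Fin.last m)
    simp [hz] at this
  have hg0K : (coG B J j0 : K) ≠ 0 := by exact_mod_cast hg0
  refine ⟨J, j0, hmono, hdet, hg0, ?_⟩
  set ρ0 : ℝ := ‖(coG B J j0 : K)‖ * ρ (J j0) with hρ0
  have hρ0pos : 0 < ρ0 := mul_pos (norm_pos_iff.2 hg0K) (hρ _)
  set ρ' : Fin (m + 1) → ℝ := Fin.snoc (fun t => ρ (J (j0.succAbove t))) ρ0 with hρ'
  have hρ'pos : ∀ s, 0 < ρ' s := by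
    intro s
    induction s using Fin.lastCases with
    | last => simpa [ρ'] using hρ0pos
    | cast t => simpa [ρ'] using hρ _
  have hex := fun i => exchange K (fun j => (coA B J i j : K)) (fun j => (coG B J j : K))
    (fun j => ρ (J j)) (fun j => hρ _) (ρ i) (hopt i) (hatt i) j0 hg0K hj0
    (fun s => (coC B J j0 i s : K)) (by simp [coC]) (by intro t; simp [coC]) ρ'
    (by simp [ρ', ρ0]) (by intro t; simp [ρ'])
  set r : Fin m → ℝ := fun t => -Real.log (ρ (J (j0.succAbove t))) + Real.log ρ0 with hr
  have hrs : ∀ s, (Fin.snoc r 0 : Fin (m + 1) → ℝ) s = -Real.log (ρ' s) + Real.log ρ0 := by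
    intro s
    induction s using Fin.lastCases with
    | last => simp [ρ']
    | cast t => simp [ρ', r]
  have htt : ∀ i s, coC B J j0 i s ≠ 0 → tterm K (coC B J j0 i) r s
      = -Real.log (‖(coC B J j0 i s : K)‖ * ρ' s) + Real.log ρ0 := by
    intro i s hs
    have h1 : ‖(coC B J j0 i s : K)‖ ≠ 0 := norm_ne_zero_iff.2 (by exact_mod_cast hs)
    rw [tterm, hrs, Real.log_mul h1 (hρ'pos s).ne', nuVal]
    ring
  refine ⟨r, ?_⟩
  rw [tropPhi_eq_of_isLeast K B _ r (fun i => -Real.log (ρ i) + Real.log ρ0)]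
  · funext ℓ
    simp only [Fmap, nuVal, mul_add, Finset.sum_add_distrib, ← Finset.sum_mul]
    have : (∑ i, (B i ℓ : ℝ)) = 0 := by exact_mod_cast hcols ℓ
    rw [this, zero_mul, add_zero]
  · intro i
    constructor
    · obtain ⟨s, hs⟩ := (hex i).2
      have hs0 : coC B J j0 i s ≠ 0 := by
        intro h
        simp only [h, Rat.cast_zero, norm_zero, zero_mul] at hs
        exact (hρ i).ne hs
      refine ⟨s, hs0, ?_⟩
      rw [htt i s hs0, hs]
    · rintro x ⟨s, hs, rfl⟩
      rw [htt i s hs]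
      have h1 : 0 < ‖(coC B J j0 i s : K)‖ := norm_pos_iff.2 (by exact_mod_cast hs)
      have := Real.log_le_log (mul_pos h1 (hρ'pos s)) ((hex i).1 s)
      linarith

theorem stmt1
    (K : Type*) [NormedField K] [IsAlgClosed K] [CharZero K] [CompleteSpace K]
    [IsUltrametricDist K]
    (hQsub : ∀ q : ℚ, ∃ x : K, x ≠ 0 ∧ nuVal K x = (q : ℝ))
    (hQint : ∀ q : ℚ, q ≠ 0 → ∃ z : ℤ, nuVal K ((q : K)) = (z : ℝ))
    (n m : ℕ)
    (B : Matrix (Fin (n + m + 2)) (Fin (m + 1)) ℤ)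
    (hrank : (B.map (Int.cast : ℤ → ℚ)).rank = m + 1)
    (hrows : ∀ i, ∃ ℓ, B i ℓ ≠ 0)
    (hcols : ∀ ℓ, (∑ i, B i ℓ) = 0) :
    closure (Fmap K B '' {lam | ∀ i, affForm K B i lam ≠ 0}) =
      {y | ∃ I : Fin m → Fin (n + m + 2), Admissible B I ∧
        ∃ T : (Fin m → K) → (Fin m → K), Function.Bijective T ∧
          (∀ (x : Fin m → K) (j : Fin m), affForm K B (I j) (T x) = x j) ∧
        ∃ c : Fin (n + m + 2) → Fin (m + 1) → ℚ,
          (∀ (i : Fin (n + m + 2)) (x : Fin m → K),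
            affForm K B i (T x)
              = (∑ t : Fin m, ((c i t.castSucc : ℚ) : K) * x t) + ((c i (Fin.last m) : ℚ) : K)) ∧
        ∃ r : Fin m → ℝ, y = tropPhi K B c r} := by
  apply Set.Subset.antisymm
  · let P := {q : (Fin (m + 1) → Fin (n + m + 2)) × Fin (m + 1) //
      StrictMono q.1 ∧ (selM B q.1).det ≠ 0 ∧ coG B q.1 q.2 ≠ 0}
    have hT := fun q : P => exists_T K B (fun t => q.1.1 (q.1.2.succAbove t))
      (admissible_of B q.1.1 q.2.1 q.1.2 q.2.2.2) (coC B q.1.1 q.1.2)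
      (coC_spec B q.1.1 q.2.2.1 q.1.2 q.2.2.2)
    have hcl : IsClosed (⋃ q : P, Set.range (tropPhi K B (coC B q.1.1 q.1.2))) := by
      refine isClosed_iUnion_of_finite fun q => ?_
      obtain ⟨T, hbij, -, hc⟩ := hT q
      exact closed_range_tropPhi K B _ (rows_ne_zero K B hrows T hbij _ hc)
    refine (closure_minimal ?_ hcl).trans ?_
    · rintro _ ⟨lam, hlam, rfl⟩
      obtain ⟨J, j0, h1, h2, h3, h4⟩ := Fmap_mem K B hrank hcols lam hlam
      exact Set.mem_iUnion.2 ⟨⟨(J, j0), h1, h2, h3⟩, h4⟩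
    · intro y hy
      obtain ⟨q, r, rfl⟩ := Set.mem_iUnion.1 hy
      obtain ⟨T, hbij, hI, hc⟩ := hT q
      exact ⟨_, admissible_of B q.1.1 q.2.1 q.1.2 q.2.2.2, T, hbij, hI, _, hc, r, rfl⟩
  · rintro y ⟨I, -, T, hbij, -, c, hc, r, rfl⟩
    exact trop_mem_closure K hQsub hQint B hrows T hbij c hc r
end

section
/- Assume at most one index j has a_j = 0. Then the complement ℝ² ∖ 𝒜 of the p-adic reduced discriminant amoeba has at most 2n² + 9n + 11 connected components. -/
/-- `z_i = -b_i / a_i`, the root of the affine form `a_i λ + b_i`. -/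
def zrt {N : ℕ} (a b : Fin N → ℚ) (i : Fin N) : ℚ := -(b i) / a i

/-- The piecewise-linear building block `g_{i,j}` of the tropical parametrization. -/
noncomputable def gfun (p : ℕ) {N : ℕ} (a b : Fin N → ℚ) (i j : Fin N) (r : ℝ) : ℝ :=
  if a j ≠ 0 then
    if zrt a b j = zrt a b i then (padicValRat p (a j) : ℝ) + r
    else (padicValRat p (a j) : ℝ) + min r ((padicValRat p (zrt a b i - zrt a b j) : ℝ))
  else (padicValRat p (b j) : ℝ)

/-- The tropical parametrization `φ_i(r) = (Σ_j a_j g_{i,j}(r), Σ_j b_j g_{i,j}(r))`. -/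
noncomputable def phiMap (p : ℕ) {N : ℕ} (a b : Fin N → ℚ) (i : Fin N) (r : ℝ) : ℝ × ℝ :=
  (∑ j, (a j : ℝ) * gfun p a b i j r, ∑ j, (b j : ℝ) * gfun p a b i j r)

/-- The `p`-adic reduced discriminant amoeba `𝒜 = ⋃_{i : a_i ≠ 0} φ_i(ℝ)`. -/
def amoeba (p : ℕ) {N : ℕ} (a b : Fin N → ℚ) : Set (ℝ × ℝ) :=
  {y | ∃ i : Fin N, a i ≠ 0 ∧ ∃ r : ℝ, phiMap p a b i r = y}

/-! ### Line arrangements -/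

/-- The value at `x` of the affine form with coefficients `l`. -/
def lineVal (l : ℝ × ℝ × ℝ) (x : ℝ × ℝ) : ℝ := l.1 * x.1 + l.2.1 * x.2 + l.2.2

lemma lineVal_cont (l : ℝ × ℝ × ℝ) : Continuous (lineVal l) := by
  unfold lineVal; fun_prop

lemma lineVal_dense (l : ℝ × ℝ × ℝ) (hl : (l.1, l.2.1) ≠ ((0 : ℝ), (0 : ℝ))) :
    Dense {x | lineVal l x ≠ 0} := by
  intro x
  have hpos : 0 < l.1 ^ 2 + l.2.1 ^ 2 := by
    by_contra h
    apply hl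
    have h1 : l.1 = 0 := by nlinarith [sq_nonneg l.1, sq_nonneg l.2.1]
    have h2 : l.2.1 = 0 := by nlinarith [sq_nonneg l.1, sq_nonneg l.2.1]
    simp [h1, h2]
  by_cases hx : lineVal l x ≠ 0
  · exact subset_closure hx
  push Not at hx
  have ht : Filter.Tendsto (fun t : ℝ => (x.1 + t * l.1, x.2 + t * l.2.1))
      (nhdsWithin 0 {0}ᶜ) (nhds x) := by
    have : Continuous (fun t : ℝ => (x.1 + t * l.1, x.2 + t * l.2.1)) := by fun_prop
    have h := this.tendsto 0
    simp only [zero_mul, add_zero, Prod.mk.eta] at h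
    exact h.mono_left nhdsWithin_le_nhds
  refine mem_closure_of_tendsto ht ?_
  filter_upwards [self_mem_nhdsWithin] with t ht
  have h0 : t ≠ 0 := ht
  have : lineVal l (x.1 + t * l.1, x.2 + t * l.2.1) = t * (l.1 ^ 2 + l.2.1 ^ 2) := by
    unfold lineVal at *
    linear_combination hx
  simp only [this]
  exact mul_ne_zero h0 hpos.ne'

section arrangement

variable {ι : Type} [Fintype ι] [DecidableEq ι]

open Classical in
/-- Sign pattern of a point. -/
noncomputable def spat (l : ι → ℝ × ℝ × ℝ) (x : ℝ × ℝ) : Finset ι :=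
  Finset.univ.filter (fun k => 0 < lineVal (l k) x)

open Classical in
/-- All sign patterns of points off the lines. -/
noncomputable def spats (l : ι → ℝ × ℝ × ℝ) : Finset (Finset ι) :=
  Finset.univ.filter (fun s => ∃ x, (∀ k, lineVal (l k) x ≠ 0) ∧ spat l x = s)

lemma spats_shatter (l : ι → ℝ × ℝ × ℝ) (s : Finset ι) (hs : (spats l).Shatters s) :
    s.card ≤ 2 := by
  by_contra hcard
  push Not at hcard
  let v : s → ℝ × ℝ := fun k => ((l k).1, (l k).2.1)
  have hli : ¬ LinearIndependent ℝ v := by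
    intro h
    have := h.fintype_card_le_finrank
    simp at this
    omega
  rw [Fintype.not_linearIndependent_iff] at hli
  obtain ⟨g, hg, i, hi⟩ := hli
  have h1 := congrArg Prod.fst hg
  have h2 := congrArg Prod.snd hg
  simp only [Prod.fst_sum, Prod.snd_sum, Prod.smul_fst, Prod.smul_snd, smul_eq_mul, v,
    Prod.fst_zero, Prod.snd_zero] at h1 h2
  have hconst : ∀ x, ∑ k : s, g k * lineVal (l k) x = ∑ k : s, g k * (l k).2.2 := by
    intro x
    have : ∑ k : s, g k * lineVal (l k) x = (∑ k : s, g k * (l k).1) * x.1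
        + (∑ k : s, g k * (l k).2.1) * x.2 + ∑ k : s, g k * (l k).2.2 := by
      rw [Finset.sum_mul, Finset.sum_mul, ← Finset.sum_add_distrib, ← Finset.sum_add_distrib]
      refine Finset.sum_congr rfl fun k _ => ?_
      unfold lineVal; ring
    rw [this, h1, h2]; ring
  have key : ∀ e : s → ℝ, ∃ x, (∀ k, lineVal (l k) x ≠ 0) ∧
      ∀ k : s, 0 < lineVal (l k) x ↔ 0 < e k := by
    intro e
    classical
    obtain ⟨u, hu, hsu⟩ := hs (t := s.filter (fun k => ∃ h : k ∈ s, 0 < e ⟨k, h⟩))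
      (Finset.filter_subset _ _)
    simp only [spats, Finset.mem_filter, Finset.mem_univ, true_and] at hu
    obtain ⟨x, hx, rfl⟩ := hu
    refine ⟨x, hx, fun k => ?_⟩
    have := congrArg (fun t => (k : ι) ∈ t) hsu
    simpa [spat] using this
  obtain ⟨x, hx, hxs⟩ := key g
  obtain ⟨y, hy, hys⟩ := key (fun k => - g k)
  have hpos : 0 < ∑ k : s, g k * lineVal (l k) x := by
    apply Finset.sum_pos'
    · intro k _
      rcases lt_trichotomy (g k) 0 with h | h | h
      · have : ¬ 0 < lineVal (l k) x := by rw [hxs]; linarith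
        nlinarith
      · simp [h]
      · have := (hxs k).2 h
        positivity
    · refine ⟨i, Finset.mem_univ _, ?_⟩
      rcases lt_or_gt_of_ne hi with h | h
      · have h3 : ¬ 0 < lineVal (l i) x := by rw [hxs]; linarith
        have h4 : lineVal (l i) x < 0 := lt_of_le_of_ne (not_lt.1 h3) (hx _)
        exact mul_pos_of_neg_of_neg h h4
      · exact mul_pos h ((hxs i).2 h)
  have hneg : ∑ k : s, g k * lineVal (l k) y ≤ 0 := by
    apply Finset.sum_nonpos
    intro k _
    rcases lt_trichotomy (g k) 0 with h | h | h
    · have := (hys k).2 (by linarith)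
      nlinarith
    · simp [h]
    · have : ¬ 0 < lineVal (l k) y := by rw [hys]; linarith
      nlinarith
  rw [hconst] at hpos hneg
  linarith

lemma spats_card (l : ι → ℝ × ℝ × ℝ) (L : ℕ) (hL : Fintype.card ι ≤ L) :
    (spats l).card ≤ 1 + L + L.choose 2 := by
  have hv : (spats l).vcDim ≤ 2 := by
    unfold Finset.vcDim
    refine Finset.sup_le fun s hs => spats_shatter l s ?_
    simpa using hs
  calc (spats l).card ≤ (spats l).shatterer.card := Finset.card_le_card_shatterer _
    _ ≤ ∑ k ∈ Finset.Iic (spats l).vcDim, (Fintype.card ι).choose k :=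
        Finset.card_shatterer_le_sum_vcDim
    _ ≤ ∑ k ∈ Finset.Iic 2, (Fintype.card ι).choose k :=
        Finset.sum_le_sum_of_subset (Finset.Iic_subset_Iic.2 hv)
    _ ≤ ∑ k ∈ Finset.Iic 2, L.choose k :=
        Finset.sum_le_sum fun k _ => Nat.choose_le_choose k hL
    _ = 1 + L + L.choose 2 := by
        have : Finset.Iic 2 = ({0, 1, 2} : Finset ℕ) := by decide
        rw [this]; simp [add_assoc]

lemma comps_le (A : Set (ℝ × ℝ)) (hA : IsClosed A) (l : ι → ℝ × ℝ × ℝ)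
    (hl : ∀ k, ((l k).1, (l k).2.1) ≠ ((0 : ℝ), (0 : ℝ)))
    (hcov : ∀ y ∈ A, ∃ k, lineVal (l k) y = 0) (L : ℕ) (hL : Fintype.card ι ≤ L) :
    Cardinal.mk (ConnectedComponents ↥(Aᶜ)) ≤ ((1 + L + L.choose 2 : ℕ) : Cardinal) := by
  classical
  have hopen : IsOpen Aᶜ := hA.isOpen_compl
  have : LocallyConnectedSpace ↥(Aᶜ) := hopen.locallyConnectedSpace
  have hU : Dense (⋂ k, {x | lineVal (l k) x ≠ 0}) :=
    dense_iInter_of_isOpen (fun k => isOpen_ne_fun (lineVal_cont _) continuous_const)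
      (fun k => lineVal_dense _ (hl k))
  have hch : ∀ s : spats l, ∃ x, (∀ k, lineVal (l k) x ≠ 0) ∧ spat l x = s := by
    rintro ⟨s, hs⟩
    simpa [spats] using hs
  choose X hX hXs using hch
  have hmem : ∀ x, (∀ k, lineVal (l k) x ≠ 0) → x ∈ Aᶜ := by
    intro x hx hxA
    obtain ⟨k, hk⟩ := hcov x hxA
    exact hx k hk
  let F : spats l → ConnectedComponents ↥(Aᶜ) := fun s =>
    ((⟨X s, hmem _ (hX s)⟩ : ↥(Aᶜ)) : ConnectedComponents ↥(Aᶜ))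
  have hF : Function.Surjective F := by
    intro c
    obtain ⟨y, rfl⟩ := ConnectedComponents.surjective_coe c
    have ho : IsOpen (Subtype.val '' connectedComponent y) :=
      hopen.isOpenMap_subtype_val _ isOpen_connectedComponent
    obtain ⟨x, hxU, hxc⟩ := hU.inter_open_nonempty _ ho ⟨y, y, mem_connectedComponent, rfl⟩
    obtain ⟨x, hxy, rfl⟩ := hxU
    simp only [Set.mem_iInter, Set.mem_ofPred_eq] at hxc
    refine ⟨⟨spat l x, by simp only [spats, Finset.mem_filter, Finset.mem_univ, true_and]; exact ⟨x, hxc, rfl⟩⟩, ?_⟩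
    generalize hs : (⟨spat l x, _⟩ : spats l) = s
    have hsx : spat l (X s) = spat l x := by rw [hXs, ← hs]
    rw [← ConnectedComponents.coe_eq_coe'.2 hxy]
    rw [ConnectedComponents.coe_eq_coe']
    have hsign : ∀ k, 0 < lineVal (l k) (X s) ↔ 0 < lineVal (l k) x := by
      intro k
      have := congrArg (fun t => k ∈ t) hsx
      simpa [spat] using this
    have hseg : segment ℝ (x : ℝ × ℝ) (X s) ⊆ Aᶜ := by
      rintro z ⟨α, β, hα, hβ, hαβ, rfl⟩
      apply hmem
      intro k
      have e : lineVal (l k) (α • (x : ℝ × ℝ) + β • X s)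
          = α * lineVal (l k) x + β * lineVal (l k) (X s) := by
        simp only [lineVal, Prod.fst_add, Prod.snd_add, Prod.smul_fst, Prod.smul_snd, smul_eq_mul]
        linear_combination (-(l k).2.2) * hαβ
      rw [e]
      have h1 := hxc k
      have h2 := hX s k
      have h3 := hsign k
      rcases lt_or_gt_of_ne h1 with h | h
      · have h4 : lineVal (l k) (X s) < 0 :=
          lt_of_le_of_ne (not_lt.1 (fun h5 => absurd (h3.1 h5) (by linarith))) h2
        rcases hα.lt_or_eq with h6 | h6
        · nlinarith
        · have : β = 1 := by linarith
          subst h6; subst this; simpa using h2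
      · have h4 := h3.2 h
        rcases hα.lt_or_eq with h6 | h6
        · nlinarith
        · have : β = 1 := by linarith
          subst h6; subst this; simpa using h2
    have hpre : IsPreconnected ((Subtype.val : ↥(Aᶜ) → ℝ × ℝ) ⁻¹' segment ℝ (x : ℝ × ℝ) (X s)) := by
      rw [← Topology.IsInducing.subtypeVal.isPreconnected_image, Subtype.image_preimage_coe,
        Set.inter_eq_right.2 hseg]
      exact (convex_segment _ _).isPreconnected
    exact hpre.subset_connectedComponent (left_mem_segment ℝ (x : ℝ × ℝ) (X s)) (right_mem_segment ℝ (x : ℝ × ℝ) (X s))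
  calc Cardinal.mk (ConnectedComponents ↥(Aᶜ)) ≤ Cardinal.mk (spats l) := by
        exact Cardinal.mk_le_of_surjective hF
    _ = ((spats l).card : Cardinal) := by simp
    _ ≤ _ := by exact_mod_cast spats_card l L hL

end arrangement

/-! ### Laminar families -/

lemma laminar_card {α : Type} [DecidableEq α] (J : Finset α) (hJ : J.Nonempty) :
    ∀ F : Finset (Finset α), (∀ C ∈ F, C.Nonempty) → (∀ C ∈ F, C ⊆ J) →
      (∀ C ∈ F, ∀ D ∈ F, ∀ k, k ∈ C → k ∈ D → C ⊆ D ∨ D ⊆ C) → F.card + 1 ≤ 2 * J.card := by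
  induction hJ using Finset.Nonempty.cons_induction with
  | singleton a =>
    intro F h1 h2 _
    have : F ⊆ {{a}} := by
      intro C hC
      rw [Finset.mem_singleton]
      exact (Finset.Nonempty.subset_singleton_iff (h1 C hC)).1 (h2 C hC)
    have := Finset.card_le_card this
    simp at this ⊢
    omega
  | cons x J hx hJ ih =>
    intro F h1 h2 h3
    let F' := (F.image (fun C => C.erase x)).erase ∅
    have hF' : F'.card + 1 ≤ 2 * J.card := by
      apply ih
      · intro C hC
        rw [Finset.nonempty_iff_ne_empty]
        exact (Finset.mem_erase.1 hC).1
      · intro C hC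
        obtain ⟨D, hD, rfl⟩ := Finset.mem_image.1 (Finset.mem_erase.1 hC).2
        intro y hy
        have := h2 D hD (Finset.mem_of_mem_erase hy)
        simp only [Finset.mem_cons] at this
        exact this.resolve_left (Finset.ne_of_mem_erase hy)
      · intro C hC D hD k hk hk'
        obtain ⟨C, hC1, rfl⟩ := Finset.mem_image.1 (Finset.mem_erase.1 hC).2
        obtain ⟨D, hD1, rfl⟩ := Finset.mem_image.1 (Finset.mem_erase.1 hD).2
        rcases h3 C hC1 D hD1 k (Finset.mem_of_mem_erase hk) (Finset.mem_of_mem_erase hk') with h | h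
        · exact Or.inl (Finset.erase_subset_erase _ h)
        · exact Or.inr (Finset.erase_subset_erase _ h)
    -- the sets containing `x` whose deletion is again a nonempty member
    let G := F.filter (fun C => x ∈ C ∧ C.erase x ∈ F)
    have hG : G.card ≤ 1 := by
      rw [Finset.card_le_one]
      have aux : ∀ C ∈ G, ∀ D ∈ G, C ⊆ D → C = D := by
        intro C hC D hD hCD
        simp only [G, Finset.mem_filter] at hC hD
        obtain ⟨k, hk⟩ := h1 _ hC.2.2
        have hk1 := Finset.mem_of_mem_erase hk
        rcases h3 C hC.1 (D.erase x) hD.2.2 k hk1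
          (Finset.erase_subset_erase _ hCD hk) with h | h
        · exact absurd (h hC.2.1) (Finset.notMem_erase x D)
        · refine Finset.Subset.antisymm hCD ?_
          intro y hy
          by_cases hyx : y = x
          · subst hyx; exact hC.2.1
          · exact h (Finset.mem_erase.2 ⟨hyx, hy⟩)
      intro C hC D hD
      have hC' := hC
      have hD' := hD
      simp only [G, Finset.mem_filter] at hC' hD'
      rcases h3 C hC'.1 D hD'.1 x hC'.2.1 hD'.2.1 with h | h
      · exact aux C hC D hD h
      · exact (aux D hD C hC h).symm
    let H := (F \ G).erase {x}
    have hH : H.card ≤ F'.card := by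
      apply Finset.card_le_card_of_injOn (fun C => C.erase x)
      · intro C hC
        have hC' : C ∈ H := hC
        simp only [H, Finset.mem_erase, Finset.mem_sdiff] at hC'
        have : C.erase x ∈ F' := by
          simp only [F', Finset.mem_erase, Finset.mem_image]
          refine ⟨?_, C, hC'.2.1, rfl⟩
          intro h0
          rw [Finset.erase_eq_empty_iff] at h0
          rcases h0 with h0 | h0
          · have := h1 C hC'.2.1
            simp [h0] at this
          · exact hC'.1 h0
        exact this
      · intro C hC D hD hCD
        have hC' : C ∈ H := hC
        have hD' : D ∈ H := hD
        simp only [H, G, Finset.mem_erase, Finset.mem_sdiff, Finset.mem_filter, not_and] at hC' hD'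
        have hCD' : C.erase x = D.erase x := hCD
        by_cases hxC : x ∈ C
        · by_cases hxD : x ∈ D
          · rw [← Finset.insert_erase hxC, ← Finset.insert_erase hxD, hCD']
          · rw [Finset.erase_eq_of_notMem hxD] at hCD'
            exact absurd (hCD' ▸ hD'.2.1) (hC'.2.2 hC'.2.1 hxC)
        · by_cases hxD : x ∈ D
          · rw [Finset.erase_eq_of_notMem hxC] at hCD'
            exact absurd (hCD' ▸ hC'.2.1) (hD'.2.2 hD'.2.1 hxD)
          · rw [← Finset.erase_eq_of_notMem hxC, ← Finset.erase_eq_of_notMem hxD, hCD']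
    have hFG : F.card ≤ (F \ G).card + G.card := by
      have := Finset.card_sdiff_add_card_eq_card (s := G) (t := F) (Finset.filter_subset _ _)
      omega
    have hHG : (F \ G).card ≤ H.card + 1 := by
      have := Finset.pred_card_le_card_erase (s := F \ G) (a := {x})
      simp only [H]; omega
    rw [Finset.card_cons]
    omega

/-! ### Closedness -/

lemma closed_range_of_affine_ends (f : ℝ → ℝ × ℝ) (hf : Continuous f) (m M : ℝ) (d e : ℝ × ℝ)
    (hM : ∀ r, M ≤ r → f r = f M + (r - M) • d) (hm : ∀ r, r ≤ m → f r = f m + (r - m) • e) :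
    IsClosed (Set.range f) := by
  have ray : ∀ (q d : ℝ × ℝ) (M : ℝ) (S : Set ℝ), IsClosed S →
      IsClosed ((fun r : ℝ => q + (r - M) • d) '' S) := by
    intro q d M S hS
    have h1 : IsClosedMap (fun r : ℝ => r • d) := isClosedMap_smul_left d
    have h2 := (Homeomorph.addLeft q).isClosedMap.comp
      (h1.comp (Homeomorph.subRight M).isClosedMap)
    exact h2 S hS
  have : Set.range f = f '' Set.Icc m M ∪ ((fun r : ℝ => f M + (r - M) • d) '' Set.Ici M ∪
      (fun r : ℝ => f m + (r - m) • e) '' Set.Iic m) := by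
    ext y
    constructor
    · rintro ⟨r, rfl⟩
      by_cases h1 : M ≤ r
      · exact Or.inr (Or.inl ⟨r, h1, (hM r h1).symm⟩)
      by_cases h2 : r ≤ m
      · exact Or.inr (Or.inr ⟨r, h2, (hm r h2).symm⟩)
      · exact Or.inl ⟨r, ⟨(not_le.1 h2).le, (not_le.1 h1).le⟩, rfl⟩
    · rintro (⟨r, _, rfl⟩ | ⟨r, h, rfl⟩ | ⟨r, h, rfl⟩)
      · exact ⟨r, rfl⟩
      · exact ⟨r, hM r h⟩
      · exact ⟨r, hm r h⟩
  rw [this]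
  exact (isCompact_Icc.image hf).isClosed.union
    ((ray _ _ _ _ isClosed_Ici).union (ray _ _ _ _ isClosed_Iic))

/-! ### Closedness of the amoeba -/

lemma gfun_cont (p : ℕ) {N : ℕ} (a b : Fin N → ℚ) (i j : Fin N) :
    Continuous (gfun p a b i j) := by
  unfold gfun
  split_ifs <;> fun_prop

lemma phiMap_cont (p : ℕ) {N : ℕ} (a b : Fin N → ℚ) (i : Fin N) :
    Continuous (phiMap p a b i) := by
  have := gfun_cont p a b i
  unfold phiMap
  fun_prop

lemma phiMap_of_slopes (p : ℕ) {N : ℕ} (a b : Fin N → ℚ) (i : Fin N) (r M : ℝ) (s : Fin N → ℝ)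
    (h : ∀ j, gfun p a b i j r = gfun p a b i j M + (r - M) * s j) :
    phiMap p a b i r = phiMap p a b i M +
      (r - M) • ((∑ j, (a j : ℝ) * s j, ∑ j, (b j : ℝ) * s j) : ℝ × ℝ) := by
  ext
  · simp only [phiMap, Prod.fst_add, Prod.smul_fst, smul_eq_mul]
    rw [Finset.mul_sum, ← Finset.sum_add_distrib]
    exact Finset.sum_congr rfl fun j _ => by rw [h]; ring
  · simp only [phiMap, Prod.snd_add, Prod.smul_snd, smul_eq_mul]
    rw [Finset.mul_sum, ← Finset.sum_add_distrib]
    exact Finset.sum_congr rfl fun j _ => by rw [h]; ring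

lemma amoeba_closed (p : ℕ) {N : ℕ} (a b : Fin N → ℚ) : IsClosed (amoeba p a b) := by
  have : amoeba p a b = ⋃ i ∈ {i | a i ≠ 0}, Set.range (phiMap p a b i) := by
    ext y
    simp [amoeba]
  rw [this]
  refine Set.Finite.isClosed_biUnion (Set.toFinite _) fun i _ => ?_
  let M : ℝ := ∑ j, |(padicValRat p (zrt a b i - zrt a b j) : ℝ)|
  have hM : ∀ j, |(padicValRat p (zrt a b i - zrt a b j) : ℝ)| ≤ M := fun j =>
    Finset.single_le_sum (f := fun j => |(padicValRat p (zrt a b i - zrt a b j) : ℝ)|)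
      (fun _ _ => abs_nonneg _) (Finset.mem_univ j)
  refine closed_range_of_affine_ends _ (phiMap_cont p a b i) (-M) M _ _
    (fun r hr => phiMap_of_slopes p a b i r M
      (fun j => if a j ≠ 0 ∧ zrt a b j = zrt a b i then 1 else 0) ?_)
    (fun r hr => phiMap_of_slopes p a b i r (-M) (fun j => if a j ≠ 0 then 1 else 0) ?_)
  · intro j
    have h := abs_le.1 (hM j)
    by_cases h1 : a j = 0
    · simp [gfun, h1]
    · by_cases h2 : zrt a b j = zrt a b i
      · simp [gfun, h1, h2]
      · simp only [gfun, ne_eq, h1, h2, not_false_eq_true, if_true, if_false, and_false]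
        rw [min_eq_right (by linarith), min_eq_right (by linarith)]; ring
  · intro j
    have h := abs_le.1 (hM j)
    by_cases h1 : a j = 0
    · simp [gfun, h1]
    · by_cases h2 : zrt a b j = zrt a b i
      · simp [gfun, h1, h2]; ring
      · simp only [gfun, ne_eq, h1, h2, not_false_eq_true, if_true, if_false]
        rw [min_eq_left (by linarith), min_eq_left (by linarith)]; ring

/-! ### Clusters -/

/-- `j` and `i` are in a common disc of radius `r`. -/
def near (p : ℕ) {N : ℕ} (a b : Fin N → ℚ) (r : ℝ) (i j : Fin N) : Prop :=
  zrt a b j = zrt a b i ∨ r ≤ (padicValRat p (zrt a b i - zrt a b j) : ℝ)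

lemma near.symm {p : ℕ} {N : ℕ} {a b : Fin N → ℚ} {r : ℝ} {i j : Fin N}
    (h : near p a b r i j) : near p a b r j i := by
  rcases h with h | h
  · exact Or.inl h.symm
  · refine Or.inr ?_
    rwa [← padicValRat.neg, neg_sub]

lemma near.mono {p : ℕ} {N : ℕ} {a b : Fin N → ℚ} {r s : ℝ} {i j : Fin N}
    (h : near p a b r i j) (hs : s ≤ r) : near p a b s i j :=
  h.imp id hs.trans

lemma near.trans {p : ℕ} (hp : p.Prime) {N : ℕ} {a b : Fin N → ℚ} {r : ℝ} {i j k : Fin N}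
    (h : near p a b r i j) (h' : near p a b r j k) : near p a b r i k := by
  have : Fact p.Prime := ⟨hp⟩
  by_cases hik : zrt a b k = zrt a b i
  · exact Or.inl hik
  rcases h with h | h
  · unfold near at *
    rwa [← h]
  rcases h' with h' | h'
  · unfold near at *
    rw [h']; exact Or.inr h
  right
  have h3 := padicValRat.min_le_padicValRat_add (p := p) (q := zrt a b i - zrt a b j)
    (r := zrt a b j - zrt a b k) (by
      intro h0; apply hik; linarith)
  rw [sub_add_sub_cancel] at h3
  have h4 : ((min (padicValRat p (zrt a b i - zrt a b j)) (padicValRat p (zrt a b j - zrt a b k)) : ℤ) : ℝ)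
    ≤ (padicValRat p (zrt a b i - zrt a b k) : ℝ) := by exact_mod_cast h3
  refine le_trans ?_ h4
  rw [Int.cast_min]
  exact le_min h h'

open Classical in
/-- The cluster of all roots in the disc of radius `r` around `z_i`. -/
noncomputable def clus (p : ℕ) {N : ℕ} (a b : Fin N → ℚ) (i : Fin N) (r : ℝ) : Finset (Fin N) :=
  Finset.univ.filter (fun j => a j ≠ 0 ∧ near p a b r i j)

lemma mem_clus {p : ℕ} {N : ℕ} {a b : Fin N → ℚ} {i j : Fin N} {r : ℝ} :
    j ∈ clus p a b i r ↔ a j ≠ 0 ∧ near p a b r i j := by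
  simp [clus]

lemma self_mem_clus {p : ℕ} {N : ℕ} {a b : Fin N → ℚ} {i : Fin N} (h : a i ≠ 0) (r : ℝ) :
    i ∈ clus p a b i r := mem_clus.2 ⟨h, Or.inl rfl⟩

lemma clus_sub {p : ℕ} (hp : p.Prime) {N : ℕ} {a b : Fin N → ℚ} {i i' k : Fin N} {r r' : ℝ}
    (hr : r ≤ r') (h : k ∈ clus p a b i r) (h' : k ∈ clus p a b i' r') :
    clus p a b i' r' ⊆ clus p a b i r := by
  intro j hj
  rw [mem_clus] at *
  exact ⟨hj.1, (h.2.trans hp (h'.2.symm.mono hr)).trans hp (hj.2.mono hr)⟩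

/-- Constant part of `g`. -/
noncomputable def hfun (p : ℕ) {N : ℕ} (a b : Fin N → ℚ) (i : Fin N) (C : Finset (Fin N))
    (j : Fin N) : ℝ :=
  if a j ≠ 0 then
    if j ∈ C then (padicValRat p (a j) : ℝ)
    else (padicValRat p (a j) : ℝ) + (padicValRat p (zrt a b i - zrt a b j) : ℝ)
  else (padicValRat p (b j) : ℝ)

lemma gfun_eq_hfun (p : ℕ) {N : ℕ} (a b : Fin N → ℚ) (i : Fin N) (C : Finset (Fin N)) (r : ℝ)
    (h1 : ∀ j ∈ C, a j ≠ 0 ∧ near p a b r i j)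
    (h2 : ∀ j, a j ≠ 0 → j ∉ C → zrt a b j ≠ zrt a b i ∧
      (padicValRat p (zrt a b i - zrt a b j) : ℝ) ≤ r) (j : Fin N) :
    gfun p a b i j r = hfun p a b i C j + r * (if j ∈ C then 1 else 0) := by
  by_cases hj : j ∈ C
  · have ⟨h3, h4⟩ := h1 j hj
    by_cases h5 : zrt a b j = zrt a b i
    · simp [gfun, hfun, hj, h3, h5]
    · have h6 := h4.resolve_left h5
      simp only [gfun, hfun, hj, h3, h5, ne_eq, not_false_eq_true, if_true, if_false]
      rw [min_eq_left h6]; ring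
  · by_cases h3 : a j = 0
    · simp [gfun, hfun, hj, h3]
    · have ⟨h4, h5⟩ := h2 j h3 hj
      simp [gfun, hfun, hj, h3, h4, min_eq_right h5]

lemma hfun_indep {p : ℕ} (hp : p.Prime) {N : ℕ} (a b : Fin N → ℚ) (i i' : Fin N) (r r' : ℝ)
    (hi' : a i' ≠ 0) (h : clus p a b i r = clus p a b i' r') (j : Fin N) :
    hfun p a b i (clus p a b i r) j = hfun p a b i' (clus p a b i r) j := by
  have : Fact p.Prime := ⟨hp⟩
  by_cases h3 : a j = 0
  · simp [hfun, h3]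
  by_cases hj : j ∈ clus p a b i r
  · simp [hfun, hj]
  have hj' : ¬ near p a b r i j := fun h4 => hj (mem_clus.2 ⟨h3, h4⟩)
  have hi : near p a b r i i' := (mem_clus.1 (h ▸ self_mem_clus hi' r')).2
  have : padicValRat p (zrt a b i - zrt a b j) = padicValRat p (zrt a b i' - zrt a b j) := by
    by_cases h5 : zrt a b i' = zrt a b i
    · rw [h5]
    have h6 := hi.resolve_left h5
    unfold near at hj'
    push Not at hj'
    have hne : zrt a b i' ≠ zrt a b j := by
      intro h7
      exact absurd hj'.2 (by rw [← h7]; exact not_lt.2 h6)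
    have h8 := padicValRat.add_eq_of_lt (p := p) (q := zrt a b i - zrt a b j)
      (r := zrt a b i' - zrt a b i) (by
        intro h0; apply hne; linarith) (sub_ne_zero.2 (Ne.symm hj'.1)) (sub_ne_zero.2 h5) (by
        rw [← padicValRat.neg (zrt a b i' - zrt a b i), neg_sub]
        exact_mod_cast hj'.2.trans_le h6)
    rw [← h8]; congr 1; ring
  simp [hfun, hj, this]

/-- A base point on the line of the cluster `C`. -/
noncomputable def qpt (p : ℕ) {N : ℕ} (a b : Fin N → ℚ) (i : Fin N) (C : Finset (Fin N)) : ℝ × ℝ :=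
  (∑ j, (a j : ℝ) * hfun p a b i C j, ∑ j, (b j : ℝ) * hfun p a b i C j)

/-- Direction of the line of the cluster `C`. -/
noncomputable def dvec {N : ℕ} (a b : Fin N → ℚ) (C : Finset (Fin N)) : ℝ × ℝ :=
  (∑ j, (a j : ℝ) * (if j ∈ C then 1 else 0), ∑ j, (b j : ℝ) * (if j ∈ C then 1 else 0))

lemma exists_line (q d : ℝ × ℝ) : ∃ l : ℝ × ℝ × ℝ, (l.1, l.2.1) ≠ ((0 : ℝ), (0 : ℝ)) ∧
    ∀ r : ℝ, lineVal l (q + r • d) = 0 := by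
  by_cases hd : d = 0
  · refine ⟨(1, 0, -q.1), by simp, fun r => ?_⟩
    simp [lineVal, hd]
  · refine ⟨(d.2, -d.1, -(d.2 * q.1 - d.1 * q.2)), ?_, fun r => ?_⟩
    · intro h
      apply hd
      simp only [Prod.mk.injEq, neg_eq_zero] at h
      exact Prod.ext h.2 h.1
    · simp only [lineVal, Prod.fst_add, Prod.snd_add, Prod.smul_fst, Prod.smul_snd, smul_eq_mul]
      ring

lemma phi_on_line (p : ℕ) {N : ℕ} (a b : Fin N → ℚ) (i : Fin N) (C : Finset (Fin N)) (r : ℝ)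
    (h1 : ∀ j ∈ C, a j ≠ 0 ∧ near p a b r i j)
    (h2 : ∀ j, a j ≠ 0 → j ∉ C → zrt a b j ≠ zrt a b i ∧
      (padicValRat p (zrt a b i - zrt a b j) : ℝ) ≤ r) :
    phiMap p a b i r = qpt p a b i C + r • dvec a b C := by
  have h := gfun_eq_hfun p a b i C r h1 h2
  ext
  · simp only [phiMap, qpt, dvec, Prod.fst_add, Prod.smul_fst, smul_eq_mul]
    rw [Finset.mul_sum, ← Finset.sum_add_distrib]
    exact Finset.sum_congr rfl fun j _ => by rw [h]; ring
  · simp only [phiMap, qpt, dvec, Prod.snd_add, Prod.smul_snd, smul_eq_mul]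
    rw [Finset.mul_sum, ← Finset.sum_add_distrib]
    exact Finset.sum_congr rfl fun j _ => by rw [h]; ring

lemma phi_on_clus (p : ℕ) {N : ℕ} (a b : Fin N → ℚ) (i : Fin N) (r : ℝ) :
    phiMap p a b i r = qpt p a b i (clus p a b i r) + r • dvec a b (clus p a b i r) := by
  apply phi_on_line
  · intro j hj; exact mem_clus.1 hj
  · intro j hj hjC
    have : ¬ near p a b r i j := fun h4 => hjC (mem_clus.2 ⟨hj, h4⟩)
    unfold near at this
    push Not at this
    exact ⟨this.1, this.2.le⟩

lemma exists_line_map {p : ℕ} (hp : p.Prime) {N : ℕ} (a b : Fin N → ℚ) :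
    ∃ l : Finset (Fin N) → ℝ × ℝ × ℝ, (∀ C, ((l C).1, (l C).2.1) ≠ ((0 : ℝ), (0 : ℝ))) ∧
      ∀ i s, a i ≠ 0 → ∀ r : ℝ, lineVal (l (clus p a b i s))
        (qpt p a b i (clus p a b i s) + r • dvec a b (clus p a b i s)) = 0 := by
  have : ∀ C : Finset (Fin N), ∃ l : ℝ × ℝ × ℝ, (l.1, l.2.1) ≠ ((0 : ℝ), (0 : ℝ)) ∧
      ∀ i s, a i ≠ 0 → C = clus p a b i s → ∀ r : ℝ,
        lineVal l (qpt p a b i C + r • dvec a b C) = 0 := by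
    intro C
    by_cases hC : ∃ i s, a i ≠ 0 ∧ C = clus p a b i s
    · obtain ⟨i, s, hi, rfl⟩ := hC
      obtain ⟨l, hl, hl'⟩ := exists_line (qpt p a b i (clus p a b i s)) (dvec a b (clus p a b i s))
      refine ⟨l, hl, fun i' s' hi' h r => ?_⟩
      have : qpt p a b i' (clus p a b i s) = qpt p a b i (clus p a b i s) := by
        unfold qpt
        simp only [hfun_indep hp a b i i' s s' hi' h]
      rw [this]; exact hl' r
    · refine ⟨(1, 0, 0), by simp, fun i s hi h => absurd ⟨i, s, hi, h⟩ hC⟩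
  choose l hl hl' using this
  exact ⟨l, hl, fun i s hi r => hl' _ i s hi rfl r⟩

open Classical in
/-- The set of all clusters. -/
noncomputable def clusters (p : ℕ) {N : ℕ} (a b : Fin N → ℚ) : Finset (Finset (Fin N)) :=
  Finset.univ.filter (fun C => ∃ i r, a i ≠ 0 ∧ C = clus p a b i r)

lemma mem_clusters {p : ℕ} {N : ℕ} {a b : Fin N → ℚ} {C : Finset (Fin N)} :
    C ∈ clusters p a b ↔ ∃ i r, a i ≠ 0 ∧ C = clus p a b i r := by
  simp [clusters]

lemma clusters_card {p : ℕ} (hp : p.Prime) {N : ℕ} (a b : Fin N → ℚ) (J : Finset (Fin N))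
    (hJ : J.Nonempty) (hJa : ∀ j, a j ≠ 0 → j ∈ J) :
    ((clusters p a b).erase J).card + 2 ≤ 2 * J.card := by
  have hsub : ∀ C ∈ clusters p a b, C ⊆ J := by
    intro C hC
    obtain ⟨i, r, hi, rfl⟩ := mem_clusters.1 hC
    intro j hj
    exact hJa j (mem_clus.1 hj).1
  have := laminar_card J hJ (insert J ((clusters p a b).erase J)) ?_ ?_ ?_
  · rw [Finset.card_insert_of_notMem (Finset.notMem_erase _ _)] at this
    omega
  · intro C hC
    rcases Finset.mem_insert.1 hC with rfl | hC
    · exact hJ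
    obtain ⟨i, r, hi, rfl⟩ := mem_clusters.1 (Finset.mem_of_mem_erase hC)
    exact ⟨i, self_mem_clus hi r⟩
  · intro C hC
    rcases Finset.mem_insert.1 hC with rfl | hC
    · exact Finset.Subset.refl _
    exact hsub C (Finset.mem_of_mem_erase hC)
  · intro C hC D hD k hk hk'
    rcases Finset.mem_insert.1 hC with rfl | hC
    · rcases Finset.mem_insert.1 hD with rfl | hD
      · exact Or.inl (Finset.Subset.refl _)
      · exact Or.inr (hsub _ (Finset.mem_of_mem_erase hD))
    rcases Finset.mem_insert.1 hD with rfl | hD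
    · exact Or.inl (hsub _ (Finset.mem_of_mem_erase hC))
    obtain ⟨i, r, hi, rfl⟩ := mem_clusters.1 (Finset.mem_of_mem_erase hC)
    obtain ⟨i', r', hi', rfl⟩ := mem_clusters.1 (Finset.mem_of_mem_erase hD)
    rcases le_total r r' with h | h
    · exact Or.inr (clus_sub hp h hk hk')
    · exact Or.inl (clus_sub hp h hk' hk)

/-- When no `a_j` vanishes, a point whose cluster is everything also lies on a smaller line. -/
lemma top_point {p : ℕ} {N : ℕ} (a b : Fin N → ℚ)
    (ha : ∑ j, a j = 0) (hb : ∑ j, b j = 0) (hne : ∀ j, a j ≠ 0) (i : Fin N) (r : ℝ)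
    (hC : clus p a b i r = Finset.univ) (hz : ∃ j, zrt a b j ≠ zrt a b i) :
    ∃ s t : ℝ, clus p a b i s ≠ Finset.univ ∧
      phiMap p a b i r = qpt p a b i (clus p a b i s) + t • dvec a b (clus p a b i s) := by
  classical
  obtain ⟨j₁, hj₁⟩ := hz
  obtain ⟨j₀, hj₀, hmin⟩ := Finset.exists_min_image
    (Finset.univ.filter (fun j => zrt a b j ≠ zrt a b i))
    (fun j => padicValRat p (zrt a b i - zrt a b j)) ⟨j₁, by simpa using hj₁⟩
  simp only [Finset.mem_filter, Finset.mem_univ, true_and] at hj₀ hmin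
  let R : ℤ := padicValRat p (zrt a b i - zrt a b j₀)
  have hnear : ∀ j, near p a b r i j := fun j =>
    (mem_clus.1 (hC ▸ Finset.mem_univ j : j ∈ clus p a b i r)).2
  have hnear' : ∀ j, near p a b (R : ℝ) i j := by
    intro j
    by_cases h : zrt a b j = zrt a b i
    · exact Or.inl h
    · exact Or.inr (by exact_mod_cast hmin j h)
  refine ⟨(R : ℝ) + 1, R, ?_, ?_⟩
  · intro h
    have := (mem_clus.1 (h ▸ Finset.mem_univ j₀ : j₀ ∈ clus p a b i ((R : ℝ) + 1))).2
    have := this.resolve_left hj₀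
    have h2 : R + 1 ≤ R := by exact_mod_cast this
    omega
  · have hphi : phiMap p a b i r = phiMap p a b i R := by
      rw [phi_on_line p a b i Finset.univ r (fun j _ => ⟨hne j, hnear j⟩) (by simp),
        phi_on_line p a b i Finset.univ R (fun j _ => ⟨hne j, hnear' j⟩) (by simp)]
      have : dvec a b Finset.univ = 0 := by
        ext
        · simp only [dvec, Finset.mem_univ, if_true, mul_one, Prod.fst_zero]
          exact_mod_cast ha
        · simp only [dvec, Finset.mem_univ, if_true, mul_one, Prod.snd_zero]
          exact_mod_cast hb
      simp [this]
    rw [hphi]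
    apply phi_on_line
    · intro j hj
      exact ⟨hne j, hnear' j⟩
    · intro j _ hj
      have : ¬ near p a b ((R : ℝ) + 1) i j := fun h4 => hj (mem_clus.2 ⟨hne j, h4⟩)
      unfold near at this
      push Not at this
      refine ⟨this.1, ?_⟩
      have h2 : padicValRat p (zrt a b i - zrt a b j) < R + 1 := by exact_mod_cast this.2
      exact_mod_cast Int.lt_add_one_iff.1 h2

lemma amoeba_cover {p : ℕ} (hp : p.Prime) (n : ℕ) (a b : Fin (n + 3) → ℚ)
    (ha : ∑ j, a j = 0) (hb : ∑ j, b j = 0)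
    (h0 : ∀ j k, a j = 0 → a k = 0 → j = k) :
    ∃ S : Finset (ℝ × ℝ × ℝ), S.card ≤ 2 * n + 4 ∧
      (∀ l ∈ S, (l.1, l.2.1) ≠ ((0 : ℝ), (0 : ℝ))) ∧
      ∀ y ∈ amoeba p a b, ∃ l ∈ S, lineVal l y = 0 := by
  classical
  obtain ⟨l, hl, hline⟩ := exists_line_map hp a b
  by_cases hz0 : ∃ j, a j = 0
  · obtain ⟨j₀, hj₀⟩ := hz0
    refine ⟨(clusters p a b).image l, ?_, ?_, ?_⟩
    · let J : Finset (Fin (n + 3)) := Finset.univ.erase j₀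
      have hJc : J.card = n + 2 := by simp [J]
      have h1 := clusters_card hp a b J (Finset.card_pos.1 (by omega)) (by
        intro j hj
        simp only [J, Finset.mem_erase, Finset.mem_univ, and_true]
        rintro rfl; exact hj hj₀)
      have h2 := Finset.pred_card_le_card_erase (s := clusters p a b) (a := J)
      have h3 := Finset.card_image_le (s := clusters p a b) (f := l)
      omega
    · intro l' hl'
      obtain ⟨C, _, rfl⟩ := Finset.mem_image.1 hl'
      exact hl C
    · rintro y ⟨i, hi, r, rfl⟩
      refine ⟨_, Finset.mem_image_of_mem l (mem_clusters.2 ⟨i, r, hi, rfl⟩), ?_⟩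
      rw [phi_on_clus]
      exact hline i r hi r
  push Not at hz0
  by_cases hz : ∀ i j, zrt a b j = zrt a b i
  · -- all roots coincide
    obtain ⟨l₀, hl₀, hl₀'⟩ := exists_line (qpt p a b 0 Finset.univ) (dvec a b Finset.univ)
    refine ⟨{l₀}, by simp, by simpa using hl₀, ?_⟩
    rintro y ⟨i, hi, r, rfl⟩
    refine ⟨l₀, by simp, ?_⟩
    rw [phi_on_line p a b i Finset.univ r (fun j _ => ⟨hz0 j, Or.inl (hz i j)⟩) (by simp)]
    have : qpt p a b i Finset.univ = qpt p a b 0 Finset.univ := by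
      simp [qpt, hfun]
    rw [this]; exact hl₀' r
  push Not at hz
  obtain ⟨i₁, j₁, hij⟩ := hz
  refine ⟨((clusters p a b).erase Finset.univ).image l, ?_, ?_, ?_⟩
  · have h1 := clusters_card hp a b Finset.univ Finset.univ_nonempty (by simp)
    have h3 := Finset.card_image_le (s := (clusters p a b).erase Finset.univ) (f := l)
    simp only [Finset.card_univ, Fintype.card_fin] at h1
    omega
  · intro l' hl'
    obtain ⟨C, _, rfl⟩ := Finset.mem_image.1 hl'
    exact hl C
  · rintro y ⟨i, hi, r, rfl⟩
    by_cases hC : clus p a b i r = Finset.univ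
    · have hz' : ∃ j, zrt a b j ≠ zrt a b i := by
        by_contra h
        push Not at h
        exact hij ((h j₁).trans (h i₁).symm)
      obtain ⟨s, t, hs, hst⟩ := top_point a b ha hb hz0 i r hC hz'
      refine ⟨_, Finset.mem_image_of_mem l
        (Finset.mem_erase.2 ⟨hs, mem_clusters.2 ⟨i, s, hi, rfl⟩⟩), ?_⟩
      rw [hst]
      exact hline i s hi t
    · refine ⟨_, Finset.mem_image_of_mem l
        (Finset.mem_erase.2 ⟨hC, mem_clusters.2 ⟨i, r, hi, rfl⟩⟩), ?_⟩
      rw [phi_on_clus]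
      exact hline i r hi r

theorem stmt3 (p n : ℕ) (hp : p.Prime) (hn : 1 ≤ n)
    (a b : Fin (n + 3) → ℚ)
    (ha : ∑ j, a j = 0) (hb : ∑ j, b j = 0)
    (hab : ∀ j, (a j, b j) ≠ ((0 : ℚ), (0 : ℚ)))
    (h0 : ∀ j k, a j = 0 → a k = 0 → j = k) :
    Cardinal.mk (ConnectedComponents ↥((amoeba p a b)ᶜ))
      ≤ ((2 * n ^ 2 + 9 * n + 11 : ℕ) : Cardinal) := by
  classical
  obtain ⟨S, hS, hS0, hcov⟩ := amoeba_cover hp n a b ha hb h0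
  have h := comps_le (ι := Fin S.card) (amoeba p a b) (amoeba_closed p a b)
    (fun k => (S.equivFin.symm k : ℝ × ℝ × ℝ)) (fun k => hS0 _ (S.equivFin.symm k).2)
    (fun y hy => by
      obtain ⟨l, hl, hly⟩ := hcov y hy
      exact ⟨S.equivFin ⟨l, hl⟩, by simpa using hly⟩) (2 * n + 4) (by simpa using hS)
  refine h.trans (le_of_eq ?_)
  congr 1
  have : (2 * n + 4).choose 2 = (n + 2) * (2 * n + 3) := by
    rw [Nat.choose_two_right]
    have : (2 * n + 4) * (2 * n + 4 - 1) = 2 * ((n + 2) * (2 * n + 3)) := by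
      have : 2 * n + 4 - 1 = 2 * n + 3 := by omega
      rw [this]; ring
    rw [this]; simp
  rw [this]; ring
end
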